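/- arXiv:math/0604376 — 3 statements merged into one kernel-verified Lean document; each statement's English description precedes it below -/
import Mathlib

section
/- 804230935331967001 = 891001 · 895051 · 1008451 is a Carmichael number less than 10^18 whose smallest prime factor is 891001, and 891001 is the largest value of the smallest prime factor among Carmichael numbers less than 10^18: every Carmichael number N < 10^18 has some prime factor p with p ≤ 891001. -/
/-- A Carmichael number: a composite natural number `N` such that
`b ^ (N - 1) ≡ 1 [MOD N]` for every `b` coprime to `N`. -/
def IsCarmichael (N : ℕ) : Prop :=
  1 < N ∧ ¬ N.Prime ∧ ∀ b : ℕ, Nat.Coprime b N → b ^ (N - 1) ≡ 1 [MOD N]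


/-- Product of the primes below 1200. -/
def LL : ℕ := 228149190778466359139857129449560694398768890311010097463828654491224815518148694118982213266501907813319510339802755210116286128710033577469216383686876489828468343305809248708951955638848225541561183679938518954330081743455665529943822978919620565055708281727728488903436872200715954243071128528640570847681156355685852107481526236406959108765134996706786798249895554286527355555757759316484715637272068433021229401885250566321477959469359370715601925295890694281355883855262254252176942885664808370

noncomputable def allB (f : ℕ → Bool) (n : ℕ) : Bool :=
  Nat.rec (motive := fun _ => Bool) true
    (fun i ih => Bool.rec (motive := fun _ => Bool) false ih (f i)) n

noncomputable def force (n : ℕ) (f : ℕ → Bool) : Bool :=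
  Nat.rec (motive := fun _ => Bool) (f 0) (fun m _ => f (Nat.succ m)) n

noncomputable def ite' (b x y : Bool) : Bool := Bool.rec (motive := fun _ => Bool) y x b

noncomputable def downB (go f : ℕ → Bool) (n : ℕ) : Bool :=
  Nat.rec (motive := fun _ => Bool) true
    (fun i ih => ite' (go i) (ite' (f i) ih false) true) n

noncomputable def cop (n : ℕ) : Bool := Nat.beq (Nat.gcd n LL) 1

noncomputable def dTest (g s t : ℕ) : Bool :=
  allB (fun d => ite' (Nat.beq (Nat.mul s s) (Nat.add (Nat.mul 4 t) (Nat.mul d d)))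
    (ite' (cop (Nat.add (Nat.mul g (Nat.div (Nat.sub s d) 2)) 1))
      (ite' (cop (Nat.add (Nat.mul g (Nat.div (Nat.add s d) 2)) 1)) false true) true) true)
    (Nat.succ s)

noncomputable def sTest (g a p M s : ℕ) : Bool :=
  force (Nat.add (Nat.mul p s) a) fun u =>
    ite' (Nat.beq (Nat.mod u M) 0) (force s fun s => force (Nat.div u M) fun t => dTest g s t) true

noncomputable def minN (x y : ℕ) : ℕ := Nat.sub x (Nat.sub x y)

noncomputable def hiS (a p B M : ℕ) : ℕ :=
  Nat.rec (motive := fun _ => ℕ) (Nat.div (Nat.mul M B) p)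
    (fun m _ => minN (Nat.div (Nat.mul M B) p)
      (Nat.div (Nat.mul a (Nat.add (Nat.mul M a) 1)) (Nat.succ m)))
    (Nat.sub (Nat.mul M a) p)

noncomputable def kBody (g a p B k : ℕ) : Bool :=
  force (Nat.sub (Nat.mul k a) g) fun M =>
    force (Nat.succ (Nat.div (Nat.mul 4 p) M)) fun lo =>
      allB (fun i => sTest g a p M (Nat.add lo i)) (Nat.sub (Nat.succ (hiS a p B M)) lo)

noncomputable def goK (g a p B k : ℕ) : Bool :=
  force (Nat.sub (Nat.mul k a) g) fun M =>
    Nat.ble (Nat.mul 4 (Nat.mul p p)) (Nat.mul (Nat.mul M M) B)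

noncomputable def kMax (g a p : ℕ) : ℕ :=
  Nat.div (Nat.add g (Nat.div (Nat.add (Nat.mul (Nat.mul 2 p) (Nat.succ a)) a)
    (Nat.mul (Nat.succ a) (Nat.succ a)))) a

noncomputable def aBody (g a : ℕ) : Bool :=
  force (Nat.add (Nat.mul g a) 1) fun p =>
    ite' (cop p)
      (force (Nat.div 999999999999999999 (Nat.mul (Nat.mul (Nat.mul g g) g) a)) fun B =>
        downB (goK g a p B) (kBody g a p B) (Nat.succ (kMax g a p))) true

noncomputable def gBody (g : ℕ) : Bool :=
  force (Nat.add 101 (Nat.sub (Nat.div 891001 g) 101)) fun lo =>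
    allB (fun i => force (Nat.add lo i) fun a =>
        ite' (Nat.ble 891001 (Nat.mul g a)) (aBody g a) true)
      (Nat.sub (Nat.succ (Nat.div 1000000 g)) lo)

noncomputable def phase1 (j : ℕ) : Bool :=
  allB (fun i => force (Nat.mul 2 (Nat.add (Nat.add 273 (Nat.mul 50 j)) i)) gBody) 50

noncomputable def kTest (a b c T e2 e1 k : ℕ) : Bool :=
  force (Nat.sub (Nat.mul k T) e1) fun m =>
    ite' (Nat.beq (Nat.mod m e2) 0)
      (force (Nat.div m e2) fun g =>
        ite' (cop (Nat.add (Nat.mul g a) 1))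
          (ite' (cop (Nat.add (Nat.mul g b) 1))
            (ite' (cop (Nat.add (Nat.mul g c) 1)) false true) true) true) true

noncomputable def cBody (a b c : ℕ) : Bool :=
  ite' (Nat.beq (Nat.gcd (Nat.mul a b) c) 1)
    (force (Nat.mul (Nat.mul a b) c) fun T =>
      force (Nat.add (Nat.mul a b) (Nat.add (Nat.mul b c) (Nat.mul c a))) fun e2 =>
        force (Nat.add a (Nat.add b c)) fun e1 =>
          force (Nat.div (Nat.add (Nat.mul (Nat.div 891001 a) e2) e1) T) fun lo =>
            allB (fun i => kTest a b c T e2 e1 (Nat.add lo i))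
              (Nat.sub (Nat.succ (Nat.div (Nat.add (Nat.mul
                (Nat.div (Nat.mul 1000000 e2) (Nat.mul 3 T)) e2) e1) T)) lo)) true

noncomputable def bBody (a b : ℕ) : Bool :=
  allB (fun i => force (Nat.add (Nat.succ b) i) fun c => cBody a b c)
    (Nat.sub (Nat.div (Nat.mul 1000000000000000000 (Nat.mul a a))
      (Nat.mul 707350352645673001 b)) b)

noncomputable def phase2 (a : ℕ) : Bool :=
  allB (fun i => force (Nat.add (Nat.succ a) i) fun b =>
    ite' (Nat.beq (Nat.gcd a b) 1) (bBody a b) true) (Nat.succ (Nat.div (Nat.mul a 190) 1000))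

set_option maxRecDepth 100000 in
theorem phase2_ok : allB phase2 101 = true := by decide +kernel

set_option maxRecDepth 100000 in
theorem phase1_ok : allB phase1 94 = true := by decide +kernel
theorem ndiv_eq (x y : ℕ) : Nat.div x y = x / y := rfl

theorem allB_spec {f : ℕ → Bool} {n : ℕ} (h : allB f n = true) : ∀ i < n, f i = true := by
  induction n with
  | zero => intro i hi; omega
  | succ n ih =>
    have h' : Bool.rec (motive := fun _ => Bool) false (allB f n) (f n) = true := h
    cases hf : f n with
    | false => rw [hf] at h'; exact absurd h' (by simp)
    | true =>
      rw [hf] at h'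
      intro i hi
      rcases Nat.lt_succ_iff_lt_or_eq.mp hi with h1 | h1
      · exact ih h' i h1
      · rw [h1]; exact hf

theorem force_eq (n : ℕ) (f : ℕ → Bool) : force n f = f n := by
  cases n <;> rfl

theorem ite'_true {b x y : Bool} (h : ite' b x y = true) (hb : b = true) : x = true := by
  subst hb; exact h

theorem downB_spec {go f : ℕ → Bool} (hm : ∀ i j, i ≤ j → go i = true → go j = true)
    {n : ℕ} (h : downB go f n = true) : ∀ i < n, go i = true → f i = true := by
  induction n with
  | zero => intro i hi; omega
  | succ n ih =>
    intro i hi hg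
    have h' : ite' (go n) (ite' (f n) (downB go f n) false) true = true := h
    have h2 := ite'_true h' (hm i n (by omega) hg)
    cases hf : f n with
    | false => rw [hf] at h2; exact absurd h2 (by simp [ite'])
    | true =>
      rcases Nat.lt_succ_iff_lt_or_eq.mp hi with h1 | h1
      · exact ih (ite'_true h2 hf) i h1 hg
      · rw [h1]; exact hf

set_option maxRecDepth 10000 in
theorem LL_dvd : LL ∣ Nat.factorial 1200 := by
  have : Nat.factorial 1200 % LL = 0 := by decide +kernel
  exact Nat.dvd_of_mod_eq_zero this

theorem cop_prime {p : ℕ} (hp : p.Prime) (h : 1200 < p) : cop p = true := by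
  unfold cop
  rw [Nat.beq_eq]
  have h1 : Nat.Coprime p (Nat.factorial 1200) := by
    rw [Nat.Prime.coprime_iff_not_dvd hp, hp.dvd_factorial]; omega
  exact Nat.Coprime.coprime_dvd_right LL_dvd h1

theorem ite'_ff {b y : Bool} (h : ite' b false y = true) : b = true → False := by
  intro hb; subst hb; exact absurd h (by simp [ite'])

theorem minN_eq (x y : ℕ) : minN x y = min x y := by
  unfold minN; simp only [Nat.sub_eq]; omega

theorem le_hiS {a p B M s : ℕ} (hp : 0 < p) (h1 : s * p ≤ M * B)
    (h2 : s * (M * a) ≤ s * p + a * (M * a + 1)) : s ≤ hiS a p B M := by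
  have k1 : s ≤ (M * B) / p := (Nat.le_div_iff_mul_le hp).2 h1
  unfold hiS
  simp only [Nat.sub_eq, Nat.mul_eq, ndiv_eq, Nat.add_eq, minN_eq]
  cases h : M * a - p with
  | zero => exact k1
  | succ m =>
    refine le_min k1 ?_
    show s ≤ a * (M * a + 1) / (m + 1)
    rw [Nat.le_div_iff_mul_le (by omega)]
    have : M * a = p + (m + 1) := by omega
    rw [this] at h2 ⊢
    nlinarith

theorem dTest_spec {g b c t : ℕ} (hbc : b ≤ c) (ht : t = b * c)
    (h : dTest g (b + c) t = true) (hb : (g * b + 1).Prime) (hc : (g * c + 1).Prime)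
    (hb' : 1200 < g * b + 1) (hc' : 1200 < g * c + 1) : False := by
  unfold dTest at h
  have h1 := allB_spec h (c - b) (by simp only [Nat.succ_eq_add_one]; omega)
  simp only [Nat.sub_eq, Nat.mul_eq, ndiv_eq, Nat.add_eq] at h1
  obtain ⟨e, rfl⟩ := Nat.exists_eq_add_of_le hbc
  have e1 : (b + (b + e) - (b + e - b)) / 2 = b := by omega
  have e2 : (b + (b + e) + (b + e - b)) / 2 = b + e := by omega
  rw [e1, e2] at h1
  have h2 := ite'_true h1 (by
    rw [Nat.beq_eq, ht, show b + e - b = e by omega]; ring)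
  have h3 := ite'_true h2 (cop_prime hb hb')
  exact ite'_ff h3 (cop_prime hc hc')

theorem kmax_aux {M A x y p a : ℕ} (_hA0 : 0 < A)
    (h : M * ((A + x) * (A + y)) = p * (A + x + (A + y)) + a) :
    M * (A * A) ≤ 2 * p * A + a := by
  by_contra hcon
  push Not at hcon
  have r1 : 2 * p < M * A := by
    by_contra hc2
    push Not at hc2
    have : M * A * A ≤ 2 * p * A := Nat.mul_le_mul_right _ hc2
    rw [mul_assoc] at this
    omega
  have r2 : 2 * p * (x + y) ≤ M * A * (x + y) := Nat.mul_le_mul_right _ r1.le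
  have e1 : M * ((A + x) * (A + y)) = M * (A * A) + M * A * (x + y) + M * (x * y) := by ring
  have e2 : p * (A + x + (A + y)) + a = 2 * p * A + p * (x + y) + a := by ring
  have e3 : 2 * p * (x + y) = p * (x + y) + p * (x + y) := by ring
  rw [e1, e2] at h
  omega

theorem lo_aux {M p a b c : ℕ} (ha : 0 < a) (h : M * (b * c) = p * (b + c) + a)
    (q : M * (4 * (b * c)) ≤ M * ((b + c) * (b + c))) :
    4 * p * (b + c) < ((b + c) * M) * (b + c) := by
  have e1 : M * (4 * (b * c)) = 4 * (M * (b * c)) := by ring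
  have e2 : M * ((b + c) * (b + c)) = ((b + c) * M) * (b + c) := by ring
  have e3 : 4 * p * (b + c) = 4 * (p * (b + c)) := by ring
  omega

theorem hi_aux {M p a b c : ℕ} (hab : a ≤ b) (hac : a ≤ c)
    (h : M * (b * c) = p * (b + c) + a) :
    (b + c) * (M * a) ≤ (b + c) * p + a * (M * a + 1) := by
  obtain ⟨x, rfl⟩ := Nat.exists_eq_add_of_le hab
  obtain ⟨y, rfl⟩ := Nat.exists_eq_add_of_le hac
  have e1 : (a + x + (a + y)) * p + a * (M * a + 1) =
    (p * (a + x + (a + y)) + a) + M * (a * a) := by ring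
  have e2 : (a + x + (a + y)) * (M * a) + M * (x * y) =
    M * ((a + x) * (a + y)) + M * (a * a) := by ring
  rw [e1, ← h]
  omega

theorem amgm3 (x y z : ℕ) :
    27 * (x * y * z) ≤ (x + y + z) * (x + y + z) * (x + y + z) := by
  have gen : ∀ x y z : ℤ, 0 ≤ x → 0 ≤ y → 0 ≤ z →
      27 * (x * y * z) ≤ (x + y + z) * (x + y + z) * (x + y + z) := by
    intro x y z hx hy hz
    nlinarith [mul_nonneg hx (sq_nonneg (y - z)), mul_nonneg hy (sq_nonneg (x - z)),
      mul_nonneg hz (sq_nonneg (x - y)), mul_nonneg hx (sq_nonneg (x - z)),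
      mul_nonneg hx (sq_nonneg (x - y)), mul_nonneg hy (sq_nonneg (y - z)),
      mul_nonneg hy (sq_nonneg (x - y)), mul_nonneg hz (sq_nonneg (x - z)),
      mul_nonneg hz (sq_nonneg (y - z))]
  have := gen x y z (by positivity) (by positivity) (by positivity)
  exact_mod_cast this

theorem sq_aux (b c : ℕ) : 4 * (b * c) ≤ (b + c) * (b + c) := by
  zify; nlinarith [sq_nonneg ((b : ℤ) - c)]

set_option maxHeartbeats 1000000 in
/-- phase 1 conclusion -/
theorem aBody_spec {g a b c k : ℕ} (ha : 0 < a) (hab : a < b) (hbc : b < c)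
    (hX : (g * a + 1) * (g * b + 1) * (g * c + 1) < 10 ^ 18) 
    (hk : k * (a * b * c) = g * (a * b + b * c + c * a) + (a + b + c))
    (h : aBody g a = true)
    (h891 : 891001 ≤ g * a)
    (pa : (g * a + 1).Prime) (pb : (g * b + 1).Prime) (pc : (g * c + 1).Prime) : False := by
  have hg : 0 < g := by
    rcases Nat.eq_zero_or_pos g with h | h
    · subst h; omega
    · exact h
  have hgb : g * a < g * b := Nat.mul_lt_mul_of_pos_left hab hg
  have hgc : g * b < g * c := Nat.mul_lt_mul_of_pos_left hbc hg
  unfold aBody at h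
  rw [force_eq] at h
  have c1 := cop_prime pa (by omega)
  have h := ite'_true h c1
  rw [force_eq] at h
  simp only [Nat.mul_eq, ndiv_eq, Nat.add_eq] at h
  set p := g * a + 1 with hp
  set B := 999999999999999999 / (g * g * g * a) with hB
  have hbcB : b * c ≤ B := by
    rw [hB, Nat.le_div_iff_mul_le (by positivity)]
    have : g * a * (g * b) * (g * c) ≤ p * (g * b + 1) * (g * c + 1) := by
      gcongr <;> omega
    have e : b * c * (g * g * g * a) = g * a * (g * b) * (g * c) := by ring
    rw [e]; norm_num at hX; omega
  -- M
  have hgka : g < k * a := by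
    by_contra hcon
    push Not at hcon
    have : k * a * (b * c) ≤ g * (b * c) := Nat.mul_le_mul_right _ hcon
    have e : k * (a * b * c) = k * a * (b * c) := by ring
    nlinarith [mul_pos ha (hab.trans' ha)]
  obtain ⟨M, hM⟩ := Nat.exists_eq_add_of_lt hgka
  set M' := M + 1 with hM'
  have hM2 : k * a = g + M' := by omega
  have hMb : M' * (b * c) = p * (b + c) + a := by
    have e : k * (a * b * c) = k * a * (b * c) := by ring
    rw [e, hM2] at hk
    rw [hp]; nlinarith
  have hsub : k * a - g = M' := by omega
  have hp0 : 0 < p := by omega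
  have hb0 : 0 < b := by omega
  have hc0 : 0 < c := by omega
  have hgo : goK g a p B k = true := by
    unfold goK
    rw [force_eq]
    simp only [Nat.mul_eq, Nat.sub_eq, hsub, Nat.ble_eq]
    have q1 : p * (b + c) ≤ M' * (b * c) := by omega
    have q2 : (p * (b + c)) * (p * (b + c)) ≤ (M' * (b * c)) * (M' * (b * c)) :=
      Nat.mul_le_mul q1 q1
    have q3 : 4 * (b * c) ≤ (b + c) * (b + c) := sq_aux b c
    have q4 : (p * p) * (4 * (b * c)) ≤ (p * p) * ((b + c) * (b + c)) := Nat.mul_le_mul_left _ q3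
    have q5 : (4 * (p * p)) * (b * c) ≤ (M' * M' * (b * c)) * (b * c) := by nlinarith
    have q6 := Nat.le_of_mul_le_mul_right q5 (by positivity)
    exact q6.trans (Nat.mul_le_mul_left _ hbcB)
  have hkm : k < Nat.succ (kMax g a p) := by
    rw [Nat.lt_succ_iff]
    unfold kMax
    simp only [Nat.mul_eq, ndiv_eq, Nat.add_eq, Nat.succ_eq_add_one]
    rw [Nat.le_div_iff_mul_le ha, hM2]
    refine Nat.add_le_add_left ?_ g
    rw [Nat.le_div_iff_mul_le (by positivity)]
    obtain ⟨x, rfl⟩ := Nat.exists_eq_add_of_le (show a + 1 ≤ b from hab)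
    obtain ⟨y, rfl⟩ := Nat.exists_eq_add_of_le (show a + 1 ≤ c by omega)
    exact kmax_aux (by omega) hMb
  have h2 := downB_spec (by
    intro i j hij
    unfold goK
    rw [force_eq, force_eq]
    simp only [Nat.mul_eq, Nat.sub_eq, Nat.ble_eq]
    intro h
    refine h.trans ?_
    gcongr) h k hkm hgo
  unfold kBody at h2
  rw [force_eq, force_eq] at h2
  simp only [Nat.mul_eq, Nat.sub_eq, ndiv_eq, Nat.add_eq, Nat.succ_eq_add_one, hsub] at h2
  have hlo : 4 * p / M' < b + c := by
    rw [Nat.div_lt_iff_lt_mul (by omega)]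
    have q3 : 4 * (b * c) ≤ (b + c) * (b + c) := sq_aux b c
    have q4 : M' * (4 * (b * c)) ≤ M' * ((b + c) * (b + c)) := Nat.mul_le_mul_left _ q3
    have q5 : 4 * p * (b + c) < ((b + c) * M') * (b + c) := lo_aux ha hMb q4
    exact Nat.lt_of_mul_lt_mul_right q5
  have hhi : b + c ≤ hiS a p B M' := by
    refine le_hiS hp0 ?_ ?_
    · have := Nat.mul_le_mul_left M' hbcB
      rw [mul_comm _ p]; omega
    · exact hi_aux hab.le (by omega) hMb
  have h3 := allB_spec h2 (b + c - (4 * p / M' + 1)) (by omega)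
  rw [show 4 * p / M' + 1 + (b + c - (4 * p / M' + 1)) = b + c by omega] at h3
  unfold sTest at h3
  rw [force_eq] at h3
  simp only [Nat.mul_eq, Nat.sub_eq, ndiv_eq, Nat.add_eq, ← hMb, force_eq] at h3
  have h4 := ite'_true h3 (by
    rw [Nat.beq_eq]
    exact Nat.mul_mod_right _ _)
  rw [Nat.mul_div_cancel_left _ (by omega)] at h4
  exact dTest_spec hbc.le rfl h4 pb pc (by omega) (by omega)

theorem phase1_spec {g a b c k : ℕ} (H : allB phase1 94 = true) (ha : 100 < a) (hab : a < b)
    (hbc : b < c) (hge : 2 ∣ g)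
    (hX : (g * a + 1) * (g * b + 1) * (g * c + 1) < 10 ^ 18) 
    (hk : k * (a * b * c) = g * (a * b + b * c + c * a) + (a + b + c))
    (h891 : 891001 ≤ g * a)
    (pa : (g * a + 1).Prime) (pb : (g * b + 1).Prime) (pc : (g * c + 1).Prime) : False := by
  have hg : 0 < g := by
    rcases Nat.eq_zero_or_pos g with h | h
    · subst h; omega
    · exact h
  have hgb : g * a ≤ g * b := Nat.mul_le_mul_left _ hab.le
  have hgc : g * a ≤ g * c := Nat.mul_le_mul_left _ (by omega)
  have hga : g * a < 1000000 := by
    by_contra hcon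
    push Not at hcon
    have : 1000000 * 1000000 * 1000000 ≤ (g * a + 1) * (g * b + 1) * (g * c + 1) := by
      gcongr <;> omega
    omega
  have hk0 : 1 ≤ k := by
    rcases Nat.eq_zero_or_pos k with h | h
    · subst h; omega
    · exact h
  have ha3 : a ≤ 3 * g := by
    by_contra hcon
    push Not at hcon
    obtain ⟨x, rfl⟩ := Nat.exists_eq_add_of_lt hab
    obtain ⟨y, rfl⟩ := Nat.exists_eq_add_of_lt hbc
    set b := a + x + 1
    set c := b + y + 1
    have s1 : 1 * (a * b * c) ≤ k * (a * b * c) := Nat.mul_le_mul_right _ hk0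
    have s2 : (3 * g + 1) * (b * c) ≤ a * (b * c) := Nat.mul_le_mul_right _ hcon
    have s3 : a * b ≤ b * c := by rw [mul_comm b c]; exact Nat.mul_le_mul_right _ (by omega)
    have s4 : c * a ≤ b * c := by rw [mul_comm b c]; exact Nat.mul_le_mul_left _ (by omega)
    have s5 : g * (a * b + b * c + c * a) ≤ g * (3 * (b * c)) :=
      Nat.mul_le_mul_left _ (by omega)
    have s6 : 4 * c ≤ b * c := Nat.mul_le_mul_right _ (by omega)
    have s7 : (3 * g + 1) * (b * c) = g * (3 * (b * c)) + b * c := by ring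
    have s8 : a * (b * c) = 1 * (a * b * c) := by ring
    omega
  have hg2 : 545 ≤ g := by
    by_contra hcon
    push Not at hcon
    have : g * a ≤ 544 * (3 * 544) := Nat.mul_le_mul (by omega) (by omega)
    omega
  have hg3 : g ≤ 9900 := by
    by_contra hcon
    push Not at hcon
    have : 9901 * 101 ≤ g * a := Nat.mul_le_mul (by omega) (by omega)
    omega
  obtain ⟨h, rfl⟩ := hge
  have h1 := allB_spec H ((h - 273) / 50) (by omega)
  unfold phase1 at h1
  have h2 := allB_spec h1 ((h - 273) % 50) (by omega)
  rw [force_eq] at h2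
  simp only [Nat.mul_eq, Nat.add_eq] at h2
  rw [show 273 + 50 * ((h - 273) / 50) + (h - 273) % 50 = h by omega] at h2
  unfold gBody at h2
  rw [force_eq] at h2
  simp only [Nat.mul_eq, Nat.add_eq, Nat.sub_eq, ndiv_eq, force_eq] at h2
  have u1 : 891001 / (2 * h) ≤ a := by
    refine Nat.div_le_of_le_mul h891
  have u2 : a ≤ 1000000 / (2 * h) := by
    rw [Nat.le_div_iff_mul_le hg]; rw [mul_comm]; omega
  have h3 := allB_spec h2 (a - (101 + (891001 / (2 * h) - 101))) (by
    simp only [Nat.succ_eq_add_one]; omega)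
  rw [show 101 + (891001 / (2 * h) - 101) + (a - (101 + (891001 / (2 * h) - 101))) = a by omega]
    at h3
  have h4 := ite'_true h3 (by rw [Nat.ble_eq]; exact h891)
  exact aBody_spec (by omega) hab hbc hX hk h4 h891 pa pb pc

theorem phase2_spec {g a b c k : ℕ} (H : allB phase2 101 = true) (ha0 : 0 < a) (ha : a ≤ 100)
    (hab : a < b) (hbc : b < c) (cab : Nat.Coprime a b) (cac : Nat.Coprime a c)
    (cbc : Nat.Coprime b c)
    (hX : (g * a + 1) * (g * b + 1) * (g * c + 1) < 10 ^ 18) 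
    (hk : k * (a * b * c) = g * (a * b + b * c + c * a) + (a + b + c))
    (h891 : 891001 ≤ g * a)
    (pa : (g * a + 1).Prime) (pb : (g * b + 1).Prime) (pc : (g * c + 1).Prime) : False := by
  have hg : 0 < g := by
    rcases Nat.eq_zero_or_pos g with h | h
    · subst h; omega
    · exact h
  have hgb : g * a ≤ g * b := Nat.mul_le_mul_left _ hab.le
  have hgc : g * a ≤ g * c := Nat.mul_le_mul_left _ (by omega)
  have hb0 : 0 < b := by omega
  have hc0 : 0 < c := by omega
  have hN : g * a * (g * b) * (g * c) < 10 ^ 18 := by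
    refine lt_of_le_of_lt ?_ hX
    gcongr <;> omega
  have hcb : c * (707350352645673001 * b) ≤ 1000000000000000000 * (a * a) := by
    have t1 : 891001 * 891001 * 891001 ≤ g * a * (g * a) * (g * a) := by gcongr
    have t2 : 891001 * 891001 * 891001 * (b * c) ≤ g * a * (g * a) * (g * a) * (b * c) :=
      Nat.mul_le_mul_right _ t1
    have t3 : g * a * (g * b) * (g * c) * (a * a) ≤ 10 ^ 18 * (a * a) :=
      Nat.mul_le_mul_right _ hN.le
    have t4 : g * a * (g * a) * (g * a) * (b * c) = g * a * (g * b) * (g * c) * (a * a) := by ring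
    norm_num at t2 t3
    nlinarith
  have h1 := allB_spec H a (by omega)
  unfold phase2 at h1
  have hb1 : b * 1000 ≤ a * 1190 := by
    by_contra hcon
    push Not at hcon
    have t1 : (a * 1190) * (a * 1190) ≤ (b * 1000) * (c * 1000) :=
      Nat.mul_le_mul hcon.le (by omega)
    have t2 : 0 < a * a := by positivity
    nlinarith
  have h2 := allB_spec h1 (b - (a + 1)) (by
    simp only [Nat.succ_eq_add_one, Nat.mul_eq, ndiv_eq]; omega)
  rw [force_eq] at h2
  simp only [Nat.succ_eq_add_one, Nat.add_eq] at h2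
  rw [show a + 1 + (b - (a + 1)) = b by omega] at h2
  have h3 := ite'_true h2 (by rw [Nat.beq_eq]; exact cab)
  unfold bBody at h3
  have hc1 : c ≤ 1000000000000000000 * (a * a) / (707350352645673001 * b) := by
    rw [Nat.le_div_iff_mul_le (by positivity)]; exact hcb
  simp only [Nat.succ_eq_add_one, Nat.mul_eq, Nat.sub_eq, Nat.add_eq, ndiv_eq,
    force_eq] at h3
  have h4 := allB_spec h3 (c - (b + 1)) (by omega)
  rw [show b + 1 + (c - (b + 1)) = c by omega] at h4
  unfold cBody at h4
  have h5 := ite'_true h4 (by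
    rw [Nat.beq_eq]; exact Nat.Coprime.mul_left cac cbc)
  simp only [force_eq] at h5
  simp only [Nat.succ_eq_add_one, Nat.mul_eq, Nat.sub_eq, Nat.add_eq, ndiv_eq] at h5
  rw [← add_assoc (a * b), ← add_assoc a b c] at h5
  set T := a * b * c with hT
  set e2 := a * b + b * c + c * a with he2
  set e1 := a + b + c with he1
  have hT0 : 0 < T := by positivity
  have he20 : 0 < e2 := by positivity
  have l1 : (891001 / a * e2 + e1) / T ≤ k := by
    rw [Nat.div_le_iff_le_mul_add_pred hT0]
    have : 891001 / a ≤ g := Nat.div_le_of_le_mul (by rw [mul_comm]; exact h891)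
    have := Nat.mul_le_mul_right e2 this
    rw [mul_comm T k, hk]; omega
  have amgm : 27 * (T * T) ≤ e2 * e2 * e2 := by
    have := amgm3 (a * b) (b * c) (c * a)
    have e : T * T = a * b * (b * c) * (c * a) := by rw [hT]; ring
    rw [e]; exact this
  have l2 : g ≤ 1000000 * e2 / (3 * T) := by
    rw [Nat.le_div_iff_mul_le (by positivity)]
    have w : (g * (3 * T)) ^ 3 ≤ (1000000 * e2) ^ 3 := by
      calc (g * (3 * T)) ^ 3 = (g * a * (g * b) * (g * c)) * (27 * (T * T)) := by rw [hT]; ring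
        _ ≤ 10 ^ 18 * (e2 * e2 * e2) := Nat.mul_le_mul hN.le amgm
        _ = _ := by ring
    exact le_of_pow_le_pow_left₀ (by norm_num) (by positivity) w
  have l3 : k ≤ (1000000 * e2 / (3 * T) * e2 + e1) / T := by
    rw [Nat.le_div_iff_mul_le hT0, hk]
    have := Nat.mul_le_mul_right e2 l2
    omega
  have h6 := allB_spec h5 (k - (891001 / a * e2 + e1) / T) (by omega)
  rw [show (891001 / a * e2 + e1) / T + (k - (891001 / a * e2 + e1) / T) = k by omega] at h6
  unfold kTest at h6
  simp only [force_eq, Nat.mul_eq, Nat.sub_eq, Nat.add_eq, ndiv_eq] at h6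
  rw [hk, Nat.add_sub_cancel] at h6
  have h7 := ite'_true h6 (by
    rw [Nat.beq_eq]
    exact Nat.mul_mod_left _ _)
  rw [Nat.mul_div_cancel _ he20] at h7
  have c1 := cop_prime pa (by omega)
  have c2 := cop_prime pb (by omega)
  have c3 := cop_prime pc (by omega)
  have h8 := ite'_true (ite'_true h7 c1) c2
  exact ite'_ff h8 c3
theorem car_units {N : ℕ} (h : IsCarmichael N) (u : (ZMod N)ˣ) : u ^ (N - 1) = 1 := by
  have hN : NeZero N := ⟨by have := h.1; omega⟩
  have hc := ZMod.val_coe_unit_coprime u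
  have h1 := h.2.2 _ hc
  rw [← ZMod.natCast_eq_natCast_iff] at h1
  push_cast at h1
  rw [ZMod.natCast_zmod_val] at h1
  ext
  push_cast
  exact h1

theorem car_dvd_units {N m : ℕ} (h : IsCarmichael N) (hm : m ∣ N) (u : (ZMod m)ˣ) :
    u ^ (N - 1) = 1 := by
  have hN : NeZero N := ⟨by have := h.1; omega⟩
  obtain ⟨v, rfl⟩ := ZMod.unitsMap_surjective hm u
  rw [← map_pow, car_units h v, map_one]

theorem car_sub_one {N p : ℕ} (h : IsCarmichael N) (hp : p.Prime) (hpN : p ∣ N) :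
    p - 1 ∣ N - 1 := by
  have : Fact p.Prime := ⟨hp⟩
  obtain ⟨u, hu⟩ := IsCyclic.exists_generator (α := (ZMod p)ˣ)
  have h1 := orderOf_eq_card_of_forall_mem_zpowers hu
  rw [Nat.card_eq_fintype_card, ZMod.card_units] at h1
  rw [← h1]
  exact orderOf_dvd_of_pow_eq_one (car_dvd_units h hpN u)

theorem car_sq {N p : ℕ} (h : IsCarmichael N) (hp : p.Prime) (hp2 : p ≠ 2)
    (hpN : p * p ∣ N) : False := by
  have h0 := h.1
  have ho := ZMod.orderOf_one_add_prime hp hp2 1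
  have hu : IsUnit (1 + (p : ZMod (p ^ 2))) := by
    have h3 : IsUnit ((1 + p : ℕ) : ZMod (p ^ 2)) := by
      rw [ZMod.isUnit_iff_coprime]
      exact Nat.Coprime.pow_right _ (by simp)
    simpa using h3
  obtain ⟨u, hu⟩ := hu
  have h1 := car_dvd_units h (show p ^ 2 ∣ N by rwa [pow_two]) u
  have h2 : (1 + (p : ZMod (p ^ 2))) ^ (N - 1) = 1 := by
    rw [← hu, ← Units.val_pow_eq_pow_val, h1, Units.val_one]
  have h3 := orderOf_dvd_of_pow_eq_one h2
  have h4 : p ∣ N - 1 := by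
    rw [show (1 + 1 : ℕ) = 2 from rfl] at ho
    rw [ho, pow_one] at h3
    exact h3
  have h5 : p ∣ N := (Dvd.intro _ rfl).trans hpN
  have h6 := (Nat.dvd_sub h5 h4)
  rw [show N - (N - 1) = 1 by omega] at h6
  exact hp.one_lt.ne' (Nat.dvd_one.mp h6)

theorem three_primes {N : ℕ} (h : IsCarmichael N) (hN : N < 10 ^ 18)
    (hp : ∀ p : ℕ, p.Prime → p ∣ N → 891001 < p) :
    ∃ p q r : ℕ, p.Prime ∧ q.Prime ∧ r.Prime ∧ p < q ∧ q < r ∧ N = p * q * r := by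
  have h1 := h.1
  have e1 : N.minFac * (N / N.minFac) = N := Nat.mul_div_cancel' (Nat.minFac_dvd N)
  have pp : N.minFac.Prime := Nat.minFac_prime (by omega)
  set p := N.minFac with hpdef
  set m := N / p with hm
  have bp := hp p pp (Nat.minFac_dvd N)
  have m1 : m ≠ 1 := by
    intro hh; rw [hh, mul_one] at e1; rw [e1] at pp; exact h.2.1 pp
  have e2 : m.minFac * (m / m.minFac) = m := Nat.mul_div_cancel' (Nat.minFac_dvd m)
  have pq : m.minFac.Prime := Nat.minFac_prime m1
  set q := m.minFac with hqdef
  set m' := m / q with hm'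
  have qN : q ∣ N := (Nat.minFac_dvd m).trans ⟨p, by rw [mul_comm]; exact e1.symm⟩
  have bq := hp q pq qN
  have hpq : p ≤ q := Nat.minFac_le_of_dvd pq.two_le qN
  have hpq2 : p ≠ q := by
    intro hh
    refine car_sq h pp (by omega) ⟨m', ?_⟩
    rw [← e1, ← e2, ← hh, mul_assoc]
  have m1' : m' ≠ 1 := by
    intro hh
    rw [hh, mul_one] at e2
    have d := car_sub_one h pq qN
    rw [← e1, ← e2] at d
    have e : p * q - 1 = p * (q - 1) + (p - 1) := by
      obtain ⟨x, hx⟩ := Nat.exists_eq_add_of_lt (show 1 < p by omega)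
      obtain ⟨y, hy⟩ := Nat.exists_eq_add_of_lt (show 1 < q by omega)
      rw [hx, hy]
      simp only [Nat.add_sub_cancel]
      have : (1 + x + 1) * (1 + y + 1) = (1 + x + 1) * (1 + y) + (1 + x) + 1 := by ring
      omega
    rw [e] at d
    have d2 := (Nat.dvd_add_right (Dvd.intro_left _ rfl)).mp d
    have := Nat.le_of_dvd (by omega) d2
    omega
  have e3 : m'.minFac * (m' / m'.minFac) = m' := Nat.mul_div_cancel' (Nat.minFac_dvd m')
  have pr : m'.minFac.Prime := Nat.minFac_prime m1'
  set r := m'.minFac with hrdef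
  set m'' := m' / r with hm''
  have rm : r ∣ m := (Nat.minFac_dvd m').trans ⟨q, by rw [mul_comm]; exact e2.symm⟩
  have mN : m ∣ N := ⟨p, by rw [mul_comm]; exact e1.symm⟩
  have br := hp r pr (rm.trans mN)
  have hqr : q ≤ r := Nat.minFac_le_of_dvd pr.two_le rm
  have hqr2 : q ≠ r := by
    intro hh
    refine car_sq h pq (by omega) ⟨p * m'', ?_⟩
    rw [← e1, ← e2, ← e3, ← hh]; ring
  have m1'' : m'' = 1 := by
    by_contra hh
    have ps := Nat.minFac_prime hh
    have sN : m''.minFac ∣ N := by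
      have d1 : m'' ∣ m' := ⟨r, by rw [mul_comm]; exact e3.symm⟩
      have d2 : m' ∣ m := ⟨q, by rw [mul_comm]; exact e2.symm⟩
      exact (Nat.minFac_dvd m'').trans (d1.trans (d2.trans mN))
    have bs := hp _ ps sN
    have hm0 : 0 < m'' := by
      rcases Nat.eq_zero_or_pos m'' with h0 | h0
      · rw [h0, mul_zero] at e3; rw [← e3, mul_zero] at e2; rw [← e2, mul_zero] at e1; omega
      · exact h0
    have bs' : 891001 < m'' := lt_of_lt_of_le bs (Nat.minFac_le hm0)
    have : 891001 * (891001 * (891001 * 891001)) ≤ N := by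
      rw [← e1, ← e2, ← e3]; gcongr
    omega
  refine ⟨p, q, r, pp, pq, pr, by omega, by omega, ?_⟩
  rw [m1'', mul_one] at e3
  rw [← e1, ← e2, ← e3, mul_assoc]

/-- the divisibility for one variable -/
theorem dvd_one {g x y z : ℕ} (hg : 0 < g)
    (h : g * x ∣ (g * x + 1) * (g * y + 1) * (g * z + 1) - 1) : x ∣ g * (y * z) + (y + z) := by
  have e : (g * x + 1) * (g * y + 1) * (g * z + 1) - 1 =
      g * x * ((g * y + 1) * (g * z + 1)) + g * (g * (y * z) + (y + z)) := by
    have : (g * x + 1) * (g * y + 1) * (g * z + 1) =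
      g * x * ((g * y + 1) * (g * z + 1)) + g * (g * (y * z) + (y + z)) + 1 := by ring
    omega
  rw [e] at h
  have := (Nat.dvd_add_right (Dvd.intro _ rfl)).mp h
  exact Nat.dvd_of_mul_dvd_mul_left hg this

/-- gcd step -/
theorem dvd_third {d x y z : ℕ} (hx : d ∣ x) (hy : d ∣ y)
    (h : x ∣ (x + 1) * (y + 1) * (z + 1) - 1) : d ∣ z := by
  have e : (x + 1) * (y + 1) * (z + 1) - 1 = x * ((y + 1) * (z + 1)) + y * (z + 1) + z := by
    have : (x + 1) * (y + 1) * (z + 1) = x * ((y + 1) * (z + 1)) + y * (z + 1) + z + 1 := by ring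
    omega
  have h1 := hx.trans h
  rw [e] at h1
  exact (Nat.dvd_add_right (Dvd.dvd.add (hx.mul_right _) (hy.mul_right _))).mp h1

theorem no_carmichael (H1 : allB phase1 94 = true) (H2 : allB phase2 101 = true)
    {N : ℕ} (h : IsCarmichael N) (hN : N < 10 ^ 18)
    (hp : ∀ p : ℕ, p.Prime → p ∣ N → 891001 < p) : False := by
  obtain ⟨p, q, r, pp, pq, pr, hpq, hqr, rfl⟩ := three_primes h hN hp
  have dp := car_sub_one h pp ⟨q * r, by ring⟩
  have dq := car_sub_one h pq ⟨p * r, by ring⟩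
  have dr := car_sub_one h pr ⟨p * q, by ring⟩
  have bp := hp p pp ⟨q * r, by ring⟩
  have op := pp.odd_of_ne_two (by omega)
  have oq := pq.odd_of_ne_two (by omega)
  clear hp h
  obtain ⟨P, rfl⟩ := Nat.exists_eq_add_of_le' (show 1 ≤ p by omega)
  obtain ⟨Q, rfl⟩ := Nat.exists_eq_add_of_le' (show 1 ≤ q by omega)
  obtain ⟨R, rfl⟩ := Nat.exists_eq_add_of_le' (show 1 ≤ r by omega)
  simp only [Nat.add_sub_cancel] at dp dq dr
  have g2 : 2 ∣ Nat.gcd P Q := by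
    refine Nat.dvd_gcd ?_ ?_
    · obtain ⟨x, hx⟩ := op; omega
    · obtain ⟨x, hx⟩ := oq; omega
  have gR : Nat.gcd P Q ∣ R := dvd_third (Nat.gcd_dvd_left _ _) (Nat.gcd_dvd_right _ _) dp
  have gPR : ∀ d, d ∣ P → d ∣ R → d ∣ Q := fun d h1 h2 =>
    dvd_third h1 h2 (by convert dp using 2; ring)
  have gQR : ∀ d, d ∣ Q → d ∣ R → d ∣ P := fun d h1 h2 =>
    dvd_third h1 h2 (by convert dq using 2; ring)
  have hg0 : 0 < Nat.gcd P Q := Nat.gcd_pos_of_pos_left _ (by omega)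
  have gmax : ∀ d, d ∣ P → d ∣ Q → d ∣ Nat.gcd P Q := fun d h1 h2 => Nat.dvd_gcd h1 h2
  obtain ⟨a, ha⟩ := Nat.gcd_dvd_left P Q
  obtain ⟨b, hb⟩ := Nat.gcd_dvd_right P Q
  obtain ⟨c, hc⟩ := gR
  generalize Nat.gcd P Q = g at *
  subst ha hb hc
  have key : ∀ d, g * d ∣ g → d = 1 := by
    intro d hd
    have : g * d ∣ g * 1 := by rwa [mul_one]
    exact Nat.dvd_one.mp (Nat.dvd_of_mul_dvd_mul_left hg0 this)
  have cab : Nat.Coprime a b := key _ (gmax _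
    (Nat.mul_dvd_mul_left _ (Nat.gcd_dvd_left _ _)) (Nat.mul_dvd_mul_left _ (Nat.gcd_dvd_right _ _)))
  have cac : Nat.Coprime a c := by
    have t1 : g * Nat.gcd a c ∣ g * a := Nat.mul_dvd_mul_left _ (Nat.gcd_dvd_left _ _)
    have t2 : g * Nat.gcd a c ∣ g * c := Nat.mul_dvd_mul_left _ (Nat.gcd_dvd_right _ _)
    exact key _ (gmax _ t1 (gPR _ t1 t2))
  have cbc : Nat.Coprime b c := by
    have t1 : g * Nat.gcd b c ∣ g * b := Nat.mul_dvd_mul_left _ (Nat.gcd_dvd_left _ _)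
    have t2 : g * Nat.gcd b c ∣ g * c := Nat.mul_dvd_mul_left _ (Nat.gcd_dvd_right _ _)
    exact key _ (gmax _ (gQR _ t1 t2) t1)
  have da := dvd_one hg0 dp
  have db : b ∣ g * (a * c) + (a + c) := dvd_one hg0 (by convert dq using 2; ring)
  have dc : c ∣ g * (a * b) + (a + b) := dvd_one hg0 (by convert dr using 2; ring)
  have hab : a < b := Nat.lt_of_mul_lt_mul_left (show g * a < g * b by omega)
  have hbc : b < c := Nat.lt_of_mul_lt_mul_left (show g * b < g * c by omega)
  have dT : a * b * c ∣ g * (a * b + b * c + c * a) + (a + b + c) := by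
    refine Nat.Coprime.mul_dvd_of_dvd_of_dvd (Nat.Coprime.mul_left cac cbc)
      (Nat.Coprime.mul_dvd_of_dvd_of_dvd cab ?_ ?_) ?_
    · have : a ∣ a * (g * (b + c) + 1) + (g * (b * c) + (b + c)) := (Dvd.intro _ rfl).add da
      convert this using 1; ring
    · have : b ∣ b * (g * (a + c) + 1) + (g * (a * c) + (a + c)) := (Dvd.intro _ rfl).add db
      convert this using 1; ring
    · have : c ∣ c * (g * (a + b) + 1) + (g * (a * b) + (a + b)) := (Dvd.intro _ rfl).add dc
      convert this using 1; ring
  obtain ⟨k, hk⟩ := dT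
  have hk' : k * (a * b * c) = g * (a * b + b * c + c * a) + (a + b + c) := by
    rw [hk, mul_comm]
  have ha0 : 0 < a := by
    rcases Nat.eq_zero_or_pos a with h0 | h0
    · subst h0; omega
    · exact h0
  rcases Nat.lt_or_ge 100 a with h100 | h100
  · exact phase1_spec H1 h100 hab hbc g2 hN hk' (by omega) pp pq pr
  · exact phase2_spec H2 ha0 h100 hab hbc cab cac cbc hN hk' (by omega) pp pq pr

theorem pr1 : Nat.Prime 891001 := by norm_num
theorem pr2 : Nat.Prime 895051 := by norm_num
theorem pr3 : Nat.Prime 1008451 := by norm_num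

theorem fermat_step {p b n : ℕ} (hp : p.Prime) (hb : Nat.Coprime b p) (hn : p - 1 ∣ n) :
    b ^ n ≡ 1 [MOD p] := by
  obtain ⟨m, rfl⟩ := hn
  have := Nat.ModEq.pow_totient hb
  rw [Nat.totient_prime hp] at this
  rw [pow_mul]
  simpa using this.pow m

theorem car_main : IsCarmichael 804230935331967001 := by
  have e : (804230935331967001 : ℕ) = 891001 * 895051 * 1008451 := by norm_num
  refine ⟨by norm_num, ?_, ?_⟩
  · rw [e]; exact Nat.not_prime_mul (by norm_num) (by norm_num)
  · intro b hb
    rw [e] at hb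
    have h3 := Nat.Coprime.coprime_mul_left_right hb
    have h12 := Nat.Coprime.coprime_mul_right_right hb
    have h2 := Nat.Coprime.coprime_mul_left_right h12
    have h1 := Nat.Coprime.coprime_mul_right_right h12
    have k1 := fermat_step (n := 804230935331967001 - 1) pr1 h1 (by norm_num)
    have k2 := fermat_step (n := 804230935331967001 - 1) pr2 h2 (by norm_num)
    have k3 := fermat_step (n := 804230935331967001 - 1) pr3 h3 (by norm_num)
    have c12 := (Nat.modEq_and_modEq_iff_modEq_mul (by norm_num)).mp ⟨k1, k2⟩
    have c := (Nat.modEq_and_modEq_iff_modEq_mul (by norm_num)).mp ⟨c12, k3⟩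
    generalize b ^ (804230935331967001 - 1) = x at *
    rw [e]; exact c

theorem minFac_main : Nat.minFac 804230935331967001 = 891001 := by
  have e : (804230935331967001 : ℕ) = 891001 * 895051 * 1008451 := by norm_num
  have hp : (Nat.minFac 804230935331967001).Prime := Nat.minFac_prime (by norm_num)
  have hd := Nat.minFac_dvd 804230935331967001
  have hl : Nat.minFac 804230935331967001 ≤ 891001 :=
    Nat.minFac_le_of_dvd (by norm_num) ⟨895051 * 1008451, by norm_num⟩
  generalize Nat.minFac 804230935331967001 = m at *
  rw [e, hp.dvd_mul, hp.dvd_mul, Nat.prime_dvd_prime_iff_eq hp pr1,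
    Nat.prime_dvd_prime_iff_eq hp pr2, Nat.prime_dvd_prime_iff_eq hp pr3] at hd
  omega

theorem carmichael_largest_smallest_prime_factor :
    (804230935331967001 : ℕ) = 891001 * 895051 * 1008451 ∧
      IsCarmichael 804230935331967001 ∧ (804230935331967001 : ℕ) < 10 ^ 18 ∧
      Nat.minFac 804230935331967001 = 891001 ∧
      ∀ N : ℕ, IsCarmichael N → N < 10 ^ 18 →
        ∃ p : ℕ, p.Prime ∧ p ∣ N ∧ p ≤ 891001 := by
  refine ⟨by norm_num, car_main, by norm_num, minFac_main, ?_⟩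
  intro N h hN
  by_contra hcon
  push Not at hcon
  exact no_carmichael phase1_ok phase2_ok h hN hcon
end

section
/- The only Carmichael numbers N less than 10^18 whose index i(N) = (N-1)/λ(N) is less than 18 are N = 561, with index 7, and N = 6601 = 7 · 23 · 41, with index 5. -/
/-- The Carmichael function `λ(N)`: the exponent of the multiplicative group
of units modulo `N`. -/
noncomputable def carmichaelLambda (N : ℕ) : ℕ := Monoid.exponent (ZMod N)ˣ

/-- The index of a Carmichael number `N`: `i(N) = (N - 1) / λ(N)`. -/
noncomputable def carmichaelIndex (N : ℕ) : ℕ := (N - 1) / carmichaelLambda N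


namespace CSI

/-- evaluate the argument first -/
noncomputable def force (x : ℕ) (f : ℕ → Bool) : Bool :=
  Nat.rec (f 0) (fun n _ => f (Nat.succ n)) x

/-- lazy if -/
noncomputable def ite' (b : Bool) (t f : Bool) : Bool := Bool.rec f t b

/-- body holds for all n in [s, s+m) -/
noncomputable def blk (body : ℕ → Bool) (s m : ℕ) : Bool :=
  Nat.rec true (fun n ih => ite' (body (Nat.add s n)) ih false) m

/-- body holds for all n in [s, s + 64 * 2^k), up to breaks -/
noncomputable def allR (brk body : ℕ → Bool) (k : ℕ) : ℕ → Bool :=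
  Nat.rec (fun s => ite' (brk s) true (blk body s 64))
    (fun k ih s => ite' (brk s) true
      (ite' (ih s) (force (Nat.add s (Nat.mul 64 (Nat.pow 2 k))) ih) false)) k

/-- prime filter -/
noncomputable def pfilt (p : ℕ) : Bool :=
  ite' (ite' (Nat.beq (Nat.gcd p 105) 1) true (Nat.ble p 7))
    (ite' (Nat.beq (Nat.gcd p 150524069716274322800691458531160297587022319) 1) true (Nat.ble p 113)) false

/-- break condition -/
noncomputable def brkF (A B M rem w lo n : ℕ) : Bool :=
  force (Nat.add lo (Nat.mul w n)) fun p =>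
  ite' (Nat.ble (Nat.mul A (Nat.pow p rem)) (Nat.mul B (Nat.pow (Nat.pred p) rem))) true
    (Nat.ble 1000000000000000000 (Nat.mul M (Nat.pow p rem)))

/-- check of the last prime -/
noncomputable def leaf (g i M L B D p : ℕ) : Bool :=
  force (Nat.div (Nat.sub (Nat.mul B (Nat.pred p)) g) (Nat.sub (Nat.mul D p) B)) fun q =>
  ite' (Nat.ble q p) true <|
  ite' (pfilt q) (ite' (pfilt p) (
  force (Nat.mul (Nat.mul M p) q) fun N =>
  ite' (Nat.beq (Nat.mul (Nat.lcm (Nat.lcm L (Nat.pred p)) (Nat.pred q)) i) (Nat.pred N))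
    (ite' (Nat.beq N 561) true (ite' (Nat.beq N 6601) true (Nat.ble 1000000000000000000 N))) true) true) true

/-- common setup -/
noncomputable def pre (g i M F w lo : ℕ) (k : ℕ → ℕ → ℕ → ℕ → Bool) : Bool :=
  force (Nat.mul g M) fun A => force (Nat.mul i F) fun B =>
  ite' (Nat.ble B A) true
  (force (Nat.sub B A) fun D =>
   force (Nat.succ (Nat.div B D)) fun l1 =>
   ite' (Nat.ble l1 lo)
    (force (Nat.pred (Nat.mul w (Nat.div (Nat.add lo w) w))) fun lo => k A B D lo)
    (force (Nat.pred (Nat.mul w (Nat.div (Nat.add l1 w) w))) fun lo => k A B D lo))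

/-- run the loop -/
noncomputable def run (A B M rem w lo : ℕ) (body : ℕ → Bool) : Bool :=
   ite' (allR (brkF A B M rem w lo) body 20 0)
     (brkF A B M rem w lo (Nat.mul 64 (Nat.pow 2 20))) false

/-- step width for the last loop -/
noncomputable def wheel (g L c lo : ℕ) (k : ℕ → Bool) : Bool :=
  ite' (ite' (Nat.beq (Nat.mod L 4) 0) (Nat.beq (Nat.mod g (Nat.mul 8 c)) 0) true)
   (ite' (ite' (Nat.ble 4 lo) (ite' (Nat.beq (Nat.mod L 3) 0) (Nat.beq (Nat.mod g (Nat.mul 3 c)) 0) true) true)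
     (k 2) (k 6))
   (ite' (ite' (Nat.ble 4 lo) (ite' (Nat.beq (Nat.mod L 3) 0) (Nat.beq (Nat.mod g (Nat.mul 3 c)) 0) true) true)
     (k 4) (k 12))

/-- last two primes -/
noncomputable def S0 (g i M F L c lo : ℕ) : Bool :=
  wheel g L c lo fun w => pre g i M F w lo fun A B D lo =>
      force (Nat.sub (Nat.mul D lo) B) fun x0 => force (Nat.mul w D) fun d2 =>
      force (Nat.sub (Nat.mul B A) (Nat.mul D g)) fun C =>
      run A B M 2 w lo fun n =>
        ite' (Nat.beq (Nat.mod C (Nat.add x0 (Nat.mul d2 n))) 0)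
          (leaf g i M L B D (Nat.add lo (Nat.mul w n))) true

/-- one step -/
noncomputable def S1 (g i k : ℕ) (ih : ℕ → ℕ → ℕ → ℕ → ℕ → Bool) (M F L c lo : ℕ) : Bool :=
    pre g i M F 2 lo fun A B _D lo =>
      run A B M (Nat.add k 3) 2 lo fun n =>
        force (Nat.add lo (Nat.mul 2 n)) fun p =>
        ite' (pfilt p)
          (ite' (Nat.beq (Nat.gcd (Nat.pred p) M) 1)
            (force (Nat.gcd L (Nat.pred p)) fun h =>
             force (Nat.mul c h) fun c' =>
             ite' (Nat.beq (Nat.mod g (Nat.mul c' (Nat.pow 2 (Nat.add k 2)))) 0)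
              (force (Nat.mul M p) fun M' =>
               force (Nat.mul F (Nat.pred p)) fun F' =>
               force (Nat.div (Nat.mul L (Nat.pred p)) h) fun L' =>
               ih M' F' L' c' (Nat.succ p))
              true)
            true)
          true

/-- the search, with `k + 2` primes to go -/
noncomputable def S (g i : ℕ) (k : ℕ) : (M F L c lo : ℕ) → Bool :=
  Nat.rec (S0 g i) (fun k ih => S1 g i k ih) k

/-- all g, i for given k -/
noncomputable def T (k g0 i0 : ℕ) : Bool :=
  blk (fun i => blk (fun g => ite' (Nat.ble i g) true
    (ite' (Nat.beq (Nat.mod g (Nat.pow 2 (Nat.succ k))) 0) (force i fun i => force g fun g => S g i k 1 1 1 1 3) true)) 1 g0) 1 i0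

theorem t0 : T 0 16 17 = true := by decide +kernel
theorem t1 : T 1 16 17 = true := by decide +kernel
theorem t2 : T 2 16 17 = true := by decide +kernel
theorem t3 : T 3 16 17 = true := by decide +kernel

theorem force_eq (x : ℕ) (f : ℕ → Bool) : force x f = f x := by
  cases x <;> rfl

theorem ite'_eq (b t f : Bool) : ite' b t f = if b then t else f := by
  cases b <;> rfl

theorem blk_sound (body : ℕ → Bool) (s m : ℕ) (h : blk body s m = true) (n : ℕ) (h1 : s ≤ n)
    (h2 : n < s + m) : body n = true := by
  induction m with
  | zero => omega
  | succ m ih =>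
    have h' : ite' (body (Nat.add s m)) (blk body s m) false = true := h
    rw [ite'_eq] at h'
    split_ifs at h' with hb
    rcases Nat.lt_or_ge n (s + m) with h3 | h3
    · exact ih h' h3
    · obtain rfl : n = s + m := by omega
      exact hb

theorem allR_sound (brk body : ℕ → Bool) (k : ℕ) : ∀ s, allR brk body k s = true → ∀ n, s ≤ n →
    n < s + 64 * 2 ^ k → (∀ m ≤ n, brk m = true → False) → body n = true := by
  induction k with
  | zero =>
    intro s h n h1 h2 hb
    have h' : ite' (brk s) true (blk body s 64) = true := h
    rw [ite'_eq] at h'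
    split_ifs at h' with hbs
    · exact (hb s h1 hbs).elim
    · exact blk_sound _ _ _ h' n h1 (by simpa using h2)
  | succ k ih =>
    intro s h n h1 h2 hb
    have h' : ite' (brk s) true
      (ite' (allR brk body k s) (force (Nat.add s (Nat.mul 64 (Nat.pow 2 k))) (allR brk body k)) false) = true := h
    rw [ite'_eq, ite'_eq, force_eq] at h'
    split_ifs at h' with hbs h3
    · exact (hb s h1 hbs).elim
    · rcases Nat.lt_or_ge n (s + 64 * 2 ^ k) with h4 | h4
      · exact ih s h3 n h1 h4 hb
      · exact ih _ h' n h4 (by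
          change n < s + 64 * 2 ^ k + 64 * 2 ^ k
          rw [pow_succ] at h2; omega) hb

theorem run_sound (A B M rem w lo : ℕ) (body : ℕ → Bool) (h : run A B M rem w lo body = true) (n : ℕ)
    (hb : ∀ m ≤ n, brkF A B M rem w lo m = true → False) : body n = true := by
  unfold run at h
  rw [ite'_eq] at h
  split_ifs at h with h1
  refine allR_sound _ _ _ _ h1 n (Nat.zero_le _) ?_ hb
  by_contra h3
  refine hb _ ?_ h
  change 64 * 2 ^ 20 ≤ n
  omega

theorem brkF_iff (A B M rem w lo n : ℕ) : brkF A B M rem w lo n = true ↔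
    A * (lo + w * n) ^ rem ≤ B * (lo + w * n - 1) ^ rem ∨ 1000000000000000000 ≤ M * (lo + w * n) ^ rem := by
  unfold brkF
  rw [force_eq, ite'_eq]
  simp only [Nat.add_eq, Nat.mul_eq, Nat.pow_eq, Nat.pred_eq_sub_one]
  split_ifs with h
  · simp only [true_iff]; left; exact Nat.ble_eq.mp h
  · rw [Nat.ble_eq]
    constructor
    · exact Or.inr
    · rintro (h1 | h1)
      · exact (h (Nat.ble_eq.mpr h1)).elim
      · exact h1

theorem pfilt_sound (p : ℕ) (hp : p.Prime) : pfilt p = true := by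
  have key : ∀ K m : ℕ, K ∣ m.factorial → Nat.gcd p K ≠ 1 → p ≤ m := by
    intro K m hK h
    have : p ∣ K := by
      by_contra h1
      exact h ((Nat.Prime.coprime_iff_not_dvd hp).mpr h1)
    exact (Nat.Prime.dvd_factorial hp).mp (this.trans hK)
  unfold pfilt
  simp only [ite'_eq]
  have h1 : (if (Nat.gcd p 105).beq 1 = true then true else p.ble 7) = true := by
    split_ifs with h
    · rfl
    · exact Nat.ble_eq.mpr (key 105 7 (by decide +kernel) (fun h2 => h (Nat.beq_eq.mpr h2)))
  rw [if_pos h1]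
  split_ifs with h
  · rfl
  · exact Nat.ble_eq.mpr (key _ 113 (by decide +kernel) (fun h2 => h (Nat.beq_eq.mpr h2)))

/-- gcd defect -/
def cf : ℕ → List ℕ → ℕ
  | _, [] => 1
  | L, p :: t => Nat.gcd L (p - 1) * cf (Nat.lcm L (p - 1)) t

/-- lcm of all -/
def lc : ℕ → List ℕ → ℕ
  | L, [] => L
  | L, p :: t => lc (Nat.lcm L (p - 1)) t

/-- totient product -/
def pm : List ℕ → ℕ
  | [] => 1
  | p :: t => (p - 1) * pm t

theorem cf_lc (l : List ℕ) : ∀ L, L * pm l = cf L l * lc L l := by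
  induction l with
  | nil => intro L; simp [pm, cf, lc]
  | cons p t ih =>
    intro L
    simp only [pm, cf, lc]
    rw [mul_assoc, ← ih, ← mul_assoc, ← mul_assoc, Nat.gcd_mul_lcm]

theorem cf_two (l : List ℕ) : ∀ L, 2 ∣ L → (∀ p ∈ l, p % 2 = 1) → 2 ^ l.length ∣ cf L l := by
  induction l with
  | nil => intro L _ _; simp [cf]
  | cons p t ih =>
    intro L hL h
    simp only [cf, List.length_cons, pow_succ']
    have h1 := h p (by simp)
    refine mul_dvd_mul (Nat.dvd_gcd hL (by omega)) (ih _ (hL.trans (Nat.dvd_lcm_left _ _)) ?_)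
    intro q hq; exact h q (by simp [hq])

theorem pm_lt (l : List ℕ) (hl : l ≠ []) (h : ∀ p ∈ l, 2 ≤ p) : pm l + 1 ≤ l.prod := by
  induction l with
  | nil => exact (hl rfl).elim
  | cons p t ih =>
    have h1 := h p (by simp)
    obtain ⟨r, rfl⟩ : ∃ r, p = r + 1 := ⟨p - 1, by omega⟩
    by_cases ht : t = []
    · subst ht; simp [pm]
    · have := ih ht (fun q hq => h q (by simp [hq]))
      simp only [pm, List.prod_cons, Nat.add_sub_cancel]
      nlinarith

theorem pm_pos (l : List ℕ) (h : ∀ p ∈ l, p.Prime) : 0 < pm l := by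
  induction l with
  | nil => simp [pm]
  | cons p t ih =>
    have := (h p (by simp)).two_le
    exact Nat.mul_pos (by omega) (ih (fun q hq => h q (by simp [hq])))

theorem pm_brk (l : List ℕ) (p : ℕ) (hp : 1 ≤ p) (h : ∀ q ∈ l, p ≤ q) :
    l.prod * (p - 1) ^ l.length ≤ pm l * p ^ l.length := by
  induction l with
  | nil => simp [pm]
  | cons q t ih =>
    have h1 := h q (by simp)
    have h2 := ih (fun q hq => h q (by simp [hq]))
    simp only [pm, List.prod_cons, List.length_cons, pow_succ]
    have h3 : q * (p - 1) ≤ (q - 1) * p := by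
      obtain ⟨r, rfl⟩ : ∃ r, p = r + 1 := ⟨p - 1, by omega⟩
      obtain ⟨s, rfl⟩ : ∃ r, q = r + 1 := ⟨q - 1, by omega⟩
      simp only [Nat.add_sub_cancel]
      nlinarith
    calc q * t.prod * ((p - 1) ^ t.length * (p - 1)) = (q * (p - 1)) * (t.prod * (p - 1) ^ t.length) := by ring
      _ ≤ ((q - 1) * p) * (pm t * p ^ t.length) := Nat.mul_le_mul h3 h2
      _ = _ := by ring

theorem pow_le_prod (l : List ℕ) (p : ℕ) (h : ∀ q ∈ l, p ≤ q) : p ^ l.length ≤ l.prod := by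
  induction l with
  | nil => simp
  | cons q t ih =>
    simp only [List.prod_cons, List.length_cons, pow_succ']
    exact Nat.mul_le_mul (h q (by simp)) (ih (fun q hq => h q (by simp [hq])))

/-- search invariant -/
structure H (g i N M F L c lo : ℕ) (l : List ℕ) : Prop where
  gpos : 0 < g
  mpos : 0 < M
  lim : N < 1000000000000000000
  prod : M * l.prod = N
  cfe : c * cf L l = g
  eq : g * M * l.prod = i * F * pm l + g
  lce : lc L l * i = N - 1
  pr : ∀ p ∈ l, p.Prime
  odd : ∀ p ∈ l, p % 2 = 1
  lo : ∀ p ∈ l, lo ≤ p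
  cop : ∀ p ∈ l, Nat.Coprime (p - 1) N
  sorted : l.Pairwise (· < ·)

theorem H.step {g i N M F L c lo p : ℕ} {t : List ℕ} (h : H g i N M F L c lo (p :: t)) :
    H g i N (M * p) (F * (p - 1)) (Nat.lcm L (p - 1)) (c * Nat.gcd L (p - 1)) (p + 1) t where
  gpos := h.gpos
  mpos := Nat.mul_pos h.mpos (h.pr p (by simp)).pos
  lim := h.lim
  prod := by rw [← h.prod, List.prod_cons, mul_assoc]
  cfe := by rw [← h.cfe, cf, mul_assoc]
  eq := by
    have := h.eq
    simp only [List.prod_cons, pm] at this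
    rw [← mul_assoc, mul_assoc _ p, this]; ring
  lce := h.lce
  pr := fun q hq => h.pr q (by simp [hq])
  odd := fun q hq => h.odd q (by simp [hq])
  lo := fun q hq => (List.pairwise_cons.mp h.sorted).1 q hq
  cop := fun q hq => h.cop q (by simp [hq])
  sorted := (List.pairwise_cons.mp h.sorted).2

theorem H.brk {g i N M F L c lo : ℕ} {l : List ℕ} (h : H g i N M F L c lo l) (p : ℕ) (hp : 2 ≤ p)
    (hl : ∀ q ∈ l, p ≤ q)
    (hb : g * M * p ^ l.length ≤ i * F * (p - 1) ^ l.length ∨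
      1000000000000000000 ≤ M * p ^ l.length) : False := by
  rcases hb with hb | hb
  · have h1 := pm_brk l p (by omega) hl
    have h2 := h.eq
    have h3 := h.gpos
    have h4 : 0 < (p - 1) ^ l.length := Nat.pow_pos (by omega)
    have h5 : (g * M * l.prod) * (p - 1) ^ l.length ≤ (i * F * pm l) * (p - 1) ^ l.length := by
      calc (g * M * l.prod) * (p - 1) ^ l.length = g * M * (l.prod * (p - 1) ^ l.length) := by ring
        _ ≤ g * M * (pm l * p ^ l.length) := Nat.mul_le_mul_left _ h1
        _ = (g * M * p ^ l.length) * pm l := by ring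
        _ ≤ (i * F * (p - 1) ^ l.length) * pm l := Nat.mul_le_mul_right _ hb
        _ = _ := by ring
    have h6 := Nat.le_of_mul_le_mul_right h5 h4
    omega
  · have h1 := Nat.mul_le_mul_left M (pow_le_prod l p hl)
    have := h.prod
    have := h.lim
    omega

theorem H.lower {g i N M F L c lo p : ℕ} {t : List ℕ} (h : H g i N M F L c lo (p :: t)) (ht : t ≠ []) :
    g * M * p < i * F * (p - 1) := by
  by_contra hc
  push Not at hc
  have h1 := h.eq
  have h2 := pm_lt t ht (fun q hq => (h.pr q (by simp [hq])).two_le)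
  have h3 := (h.pr p (by simp)).two_le
  have h4 := h.gpos
  have h5 := h.mpos
  simp only [List.prod_cons, pm] at h1
  have h6 : g * M * p * (pm t + 1) ≤ g * M * p * t.prod := Nat.mul_le_mul_left _ h2
  have h7 : i * F * (p - 1) * pm t ≤ g * M * p * pm t := Nat.mul_le_mul_right _ hc
  have h8 : g * 1 * 2 ≤ g * M * p := Nat.mul_le_mul (Nat.mul_le_mul_left _ h5) h3
  have h9 : g * M * (p * t.prod) = g * M * p * t.prod := by ring
  have h10 : i * F * ((p - 1) * pm t) = i * F * (p - 1) * pm t := by ring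
  rw [mul_add] at h6
  omega

theorem pre_sound (g i M F w lo : ℕ) (k : ℕ → ℕ → ℕ → ℕ → Bool) (h : pre g i M F w lo k = true)
    (p : ℕ) (hw : 0 < w) (hp : 0 < p) (hlo : lo ≤ p) (hl : g * M * p < i * F * (p - 1)) (hwp : w ∣ p + 1) :
    ∃ lo' n, p = lo' + w * n ∧ g * M < i * F ∧ i * F < (i * F - g * M) * lo' ∧ lo ≤ lo' ∧
      k (g * M) (i * F) (i * F - g * M) lo' = true := by
  have hAB : g * M < i * F := by
    by_contra hc
    push Not at hc
    have : i * F * (p - 1) ≤ g * M * p := Nat.mul_le_mul hc (by omega)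
    omega
  unfold pre at h
  simp only [force_eq, ite'_eq, Nat.ble_eq, Nat.mul_eq, Nat.sub_eq, show ∀ a b, Nat.div a b = a / b from fun _ _ => rfl, Nat.add_eq, Nat.pred_eq_sub_one, Nat.succ_eq_add_one] at h
  rw [if_neg (by omega)] at h
  have hD : 0 < i * F - g * M := by omega
  have hBp : i * F < p * (i * F - g * M) := by
    obtain ⟨r, rfl⟩ : ∃ r, p = r + 1 := ⟨p - 1, by omega⟩
    obtain ⟨D, hDD⟩ : ∃ D, i * F = g * M + D := ⟨i * F - g * M, by omega⟩
    rw [hDD] at hl ⊢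
    simp only [Nat.add_sub_cancel, Nat.add_sub_cancel_left] at hl ⊢
    nlinarith
  have hl1 : i * F / (i * F - g * M) + 1 ≤ p := (Nat.div_lt_iff_lt_mul hD).mpr hBp
  have key : ∀ l0, l0 ≤ p → ∃ n, p = w * ((l0 + w) / w) - 1 + w * n := by
    intro l0 h0
    obtain ⟨t, ht⟩ := hwp
    have h1 : (l0 + w) / w ≤ t := by
      have : (l0 + w) / w < t + 1 := by
        rw [Nat.div_lt_iff_lt_mul hw]; nlinarith
      omega
    obtain ⟨n, rfl⟩ := Nat.exists_eq_add_of_le h1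
    refine ⟨n, ?_⟩
    have h2 : 1 ≤ (l0 + w) / w := by
      rw [Nat.le_div_iff_mul_le hw]; omega
    have h3 : w * 1 ≤ w * ((l0 + w) / w) := Nat.mul_le_mul_left _ h2
    rw [mul_add] at ht
    omega
  have key2 : ∀ l0, l0 ≤ w * ((l0 + w) / w) - 1 := by
    intro l0
    have := Nat.div_add_mod (l0 + w) w
    have := Nat.mod_lt (l0 + w) hw
    omega
  have key3 : ∀ l0, i * F / (i * F - g * M) + 1 ≤ l0 → i * F < (i * F - g * M) * l0 := by
    intro l0 h0
    rw [mul_comm (i * F - g * M) l0]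
    exact (Nat.div_lt_iff_lt_mul hD).mp h0
  split_ifs at h with hc
  · obtain ⟨n, hn⟩ := key lo hlo
    exact ⟨_, n, hn, hAB, key3 _ (hc.trans (key2 lo)), key2 lo, h⟩
  · obtain ⟨n, hn⟩ := key _ hl1
    exact ⟨_, n, hn, hAB, key3 _ (key2 _), le_trans (by omega) (key2 _), h⟩

theorem wheel_sound {g i N M F L c lo p q : ℕ} (h : H g i N M F L c lo [p, q]) (k : ℕ → Bool)
    (hk : wheel g L c lo k = true) : ∃ w, 0 < w ∧ w ∣ p + 1 ∧ k w = true := by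
  have hp2 := h.odd p (by simp)
  have hq2 := h.odd q (by simp)
  have hp := h.pr p (by simp)
  have hlo := h.lo p (by simp)
  have hcf := h.cfe
  simp only [cf, mul_one] at hcf
  have h4 : L % 4 = 0 → g % (8 * c) ≠ 0 → p % 4 = 3 := by
    intro hL hg
    by_contra hc
    apply hg
    apply Nat.mod_eq_zero_of_dvd
    rw [← hcf, mul_comm 8 c]
    refine mul_dvd_mul_left c ?_
    have e1 : 4 ∣ L.gcd (p - 1) := Nat.dvd_gcd (by omega) (by omega)
    have e2 : 2 ∣ (L.lcm (p - 1)).gcd (q - 1) :=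
      Nat.dvd_gcd (Dvd.dvd.trans (by omega) (Nat.dvd_lcm_right L (p - 1))) (by omega)
    exact mul_dvd_mul e1 e2
  have h3 : 4 ≤ lo → L % 3 = 0 → g % (3 * c) ≠ 0 → p % 3 = 2 := by
    intro hl hL hg
    have h0 : p % 3 ≠ 0 := by
      intro h0
      have := (Nat.prime_dvd_prime_iff_eq Nat.prime_three hp).mp (Nat.dvd_of_mod_eq_zero h0)
      omega
    by_contra hc
    apply hg
    apply Nat.mod_eq_zero_of_dvd
    rw [← hcf, mul_comm 3 c]
    refine mul_dvd_mul_left c ?_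
    have e1 : 3 ∣ L.gcd (p - 1) := Nat.dvd_gcd (by omega) (by omega)
    exact e1.mul_right _
  unfold wheel at hk
  have hmod : ∀ a b, Nat.mod a b = a % b := fun _ _ => rfl
  have e1 : (ite' (Nat.beq (Nat.mod L 4) 0) (Nat.beq (Nat.mod g (Nat.mul 8 c)) 0) true = true) ↔
      ¬ (L % 4 = 0 ∧ g % (8 * c) ≠ 0) := by
    rw [ite'_eq]
    split_ifs with hh <;> simp only [Nat.beq_eq, hmod, Nat.mul_eq] at hh ⊢
    · tauto
    · tauto
  have e2 : (ite' (Nat.ble 4 lo) (ite' (Nat.beq (Nat.mod L 3) 0) (Nat.beq (Nat.mod g (Nat.mul 3 c)) 0) true) true = true) ↔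
      ¬ (4 ≤ lo ∧ L % 3 = 0 ∧ g % (3 * c) ≠ 0) := by
    rw [ite'_eq, ite'_eq]
    split_ifs with hh h2 <;> simp only [Nat.beq_eq, Nat.ble_eq, hmod, Nat.mul_eq] at *
    · tauto
    · tauto
    · tauto
  rw [ite'_eq, ite'_eq _ (k 2), ite'_eq _ (k 4)] at hk
  simp only [e1, e2] at hk
  by_cases c1 : L % 4 = 0 ∧ g % (8 * c) ≠ 0 <;> by_cases c2 : 4 ≤ lo ∧ L % 3 = 0 ∧ g % (3 * c) ≠ 0
  · refine ⟨12, by norm_num, ?_, ?_⟩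
    · have := h4 c1.1 c1.2; have := h3 c2.1 c2.2.1 c2.2.2; omega
    · rwa [if_neg (not_not.mpr c1), if_neg (not_not.mpr c2)] at hk
  · refine ⟨4, by norm_num, ?_, ?_⟩
    · have := h4 c1.1 c1.2; omega
    · rwa [if_neg (not_not.mpr c1), if_pos c2] at hk
  · refine ⟨6, by norm_num, ?_, ?_⟩
    · have := h3 c2.1 c2.2.1 c2.2.2; omega
    · rwa [if_pos c1, if_neg (not_not.mpr c2)] at hk
  · refine ⟨2, by norm_num, by omega, ?_⟩
    rwa [if_pos c1, if_pos c2] at hk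

theorem leaf_sound {g i N M F L c lo p q : ℕ} (h : H g i N M F L c lo [p, q])
    (hAB : g * M < i * F)
    (hk : leaf g i M L (i * F) (i * F - g * M) p = true) : N = 561 ∨ N = 6601 := by
  have hl := h.lower (by simp)
  have heq := h.eq
  simp only [pm, List.prod_cons, List.prod_nil, mul_one] at heq
  have hp := h.pr p (by simp)
  have hq := h.pr q (by simp)
  have hpq : p < q := (List.pairwise_cons.mp h.sorted).1 q (by simp)
  have hN := h.prod
  simp only [List.prod_cons, List.prod_nil, mul_one] at hN
  have hlc := h.lce
  simp only [lc] at hlc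
  have hlim := h.lim
  have e : (i * F * (p - 1) - g) / ((i * F - g * M) * p - i * F) = q := by
    obtain ⟨r, rfl⟩ : ∃ r, p = r + 1 := ⟨p - 1, by have := hp.pos; omega⟩
    obtain ⟨s, rfl⟩ : ∃ r, q = r + 1 := ⟨q - 1, by omega⟩
    obtain ⟨D, hDD⟩ : ∃ D, i * F = g * M + D := ⟨i * F - g * M, by omega⟩
    rw [hDD] at hl heq ⊢
    generalize g * M = A at *
    simp only [Nat.add_sub_cancel, Nat.add_sub_cancel_left] at hl heq ⊢
    have h1 : A + D < D * (r + 1) := by nlinarith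
    obtain ⟨x, hx⟩ : ∃ x, D * (r + 1) = A + D + x := ⟨D * (r + 1) - (A + D), by omega⟩
    rw [hx, Nat.add_sub_cancel_left]
    have hx0 : 0 < x := by omega
    apply Nat.div_eq_of_eq_mul_left hx0
    have : (A + D) * r = (s + 1) * x + g := by nlinarith
    omega
  unfold leaf at hk
  simp only [force_eq, ite'_eq, Nat.ble_eq, Nat.beq_eq, Nat.mul_eq, Nat.sub_eq, show ∀ a b, Nat.div a b = a / b from fun _ _ => rfl, Nat.pred_eq_sub_one] at hk
  rw [e, if_neg (by omega), if_pos (pfilt_sound q hq), if_pos (pfilt_sound p hp)] at hk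
  rw [mul_assoc, hN, if_pos hlc] at hk
  split_ifs at hk with h1 h2
  · exact Or.inl h1
  · exact Or.inr h2
  · rw [Nat.ble_eq] at hk; omega

theorem S0_sound {g i N M F L c lo p q : ℕ} (hlo2 : 2 ≤ lo) (h : H g i N M F L c lo [p, q])
    (hk : S0 g i M F L c lo = true) : N = 561 ∨ N = 6601 := by
  unfold S0 at hk
  obtain ⟨w, hw0, hwp, hk⟩ := wheel_sound h _ hk
  have hl := h.lower (by simp)
  have hp := h.pr p (by simp)
  have hpq : p < q := (List.pairwise_cons.mp h.sorted).1 q (by simp)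
  obtain ⟨lo', n, hpn, hAB, hB, hll, hk⟩ := pre_sound _ _ _ _ _ _ _ hk p hw0 hp.pos (h.lo p (by simp)) hl hwp
  simp only [force_eq] at hk
  have hk := run_sound _ _ _ _ _ _ _ hk n (by
    intro m hm hb
    rw [brkF_iff] at hb
    have hm' : w * m ≤ w * n := Nat.mul_le_mul_left _ hm
    refine h.brk (lo' + w * m) (by omega) ?_ hb
    intro r hr
    simp only [List.mem_cons, List.not_mem_nil, or_false] at hr
    rcases hr with rfl | rfl <;> omega)
  rw [ite'_eq] at hk
  have ht : (Nat.beq (Nat.mod (Nat.sub (Nat.mul (i * F) (g * M)) (Nat.mul (i * F - g * M) g))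
      (Nat.add (Nat.sub (Nat.mul (i * F - g * M) lo') (i * F)) (Nat.mul (Nat.mul w (i * F - g * M)) n))) 0) = true := by
    rw [Nat.beq_eq]
    apply Nat.mod_eq_zero_of_dvd
    simp only [Nat.add_eq, Nat.mul_eq, Nat.sub_eq]
    have heq := h.eq
    simp only [pm, List.prod_cons, List.prod_nil, mul_one] at heq
    have e1 : (i * F - g * M) * lo' - i * F + w * (i * F - g * M) * n = (i * F - g * M) * p - i * F := by
      rw [hpn, mul_add, show (i * F - g * M) * (w * n) = w * (i * F - g * M) * n by ring]
      omega
    rw [e1]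
    obtain ⟨r, hr⟩ : ∃ r, p = r + 1 := ⟨p - 1, by have := hp.pos; omega⟩
    obtain ⟨s, hs⟩ : ∃ r, q = r + 1 := ⟨q - 1, by omega⟩
    clear hk e1 hpn hB hwp
    rw [hr] at hl heq ⊢
    rw [hs] at heq
    obtain ⟨D, hDD⟩ : ∃ D, i * F = g * M + D := ⟨i * F - g * M, by omega⟩
    rw [hDD] at hl heq ⊢
    generalize g * M = A at *
    simp only [Nat.add_sub_cancel, Nat.add_sub_cancel_left] at hl heq ⊢
    have h1 : A + D < D * (r + 1) := by nlinarith
    obtain ⟨x, hx⟩ : ∃ x, D * (r + 1) = A + D + x := ⟨D * (r + 1) - (A + D), by omega⟩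
    rw [hx, Nat.add_sub_cancel_left]
    have e2 : (A + D) * r = (s + 1) * x + g := by nlinarith
    have e3 : (A + D) * A + (A + D) * x = D * ((s + 1) * x) + D * g := by
      rw [← mul_add, ← mul_add, ← e2]
      have : A + x = D * r := by nlinarith
      rw [this]; ring
    have e4 : (A + D) * x ≤ D * ((s + 1) * x) ∨ D * ((s + 1) * x) ≤ (A + D) * x := le_total _ _
    rcases e4 with e4 | e4
    · have : (A + D) * A - D * g = D * ((s + 1) * x) - (A + D) * x := by omega
      rw [this]
      exact Nat.dvd_sub (Dvd.intro_left (D * (s + 1)) (by ring)) (Dvd.intro_left _ rfl)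
    · have : (A + D) * A - D * g = 0 := by omega
      rw [this]; exact dvd_zero _
  rw [if_pos ht] at hk
  refine leaf_sound h hAB ?_
  rw [hpn]; exact hk

theorem S_sound {g i N : ℕ} (k : ℕ) : ∀ (M F L c lo : ℕ) (l : List ℕ), 2 ≤ lo → l.length = k + 2 →
    H g i N M F L c lo l → S g i k M F L c lo = true → N = 561 ∨ N = 6601 := by
  induction k with
  | zero =>
    intro M F L c lo l hlo hl h hk
    match l, hl with
    | [p, q], _ => exact S0_sound hlo h hk
  | succ k ih =>
    intro M F L c lo l hlo hl h hk
    match l, hl with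
    | p :: t, hl =>
    have htl : t.length = k + 2 := by simpa using hl
    have ht : t ≠ [] := by rintro rfl; simp at htl
    replace hk : S1 g i k (S g i k) M F L c lo = true := hk
    unfold S1 at hk
    have hp := h.pr p (by simp)
    have hodd := h.odd p (by simp)
    obtain ⟨lo', n, hpn, hAB, hB, hll, hk⟩ := pre_sound _ _ _ _ _ _ _ hk p (by norm_num) hp.pos (h.lo p (by simp))
      (h.lower ht) (by omega)
    have hk := run_sound _ _ _ _ _ _ _ hk n (by
      intro m hm hb
      rw [brkF_iff] at hb
      refine h.brk (lo' + 2 * m) (by omega) ?_ (by rw [hl]; exact hb)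
      intro r hr
      rcases List.mem_cons.mp hr with rfl | hr
      · omega
      · have := (List.pairwise_cons.mp h.sorted).1 r hr
        omega)
    simp only [force_eq, ite'_eq] at hk
    rw [show Nat.add lo' (Nat.mul 2 n) = p from hpn.symm] at hk
    have hs := h.step
    have c1 : Nat.beq (Nat.gcd (Nat.pred p) M) 1 = true := by
      rw [Nat.beq_eq]
      exact Nat.Coprime.coprime_dvd_right (Dvd.intro _ h.prod) (h.cop p (by simp))
    have c2 : Nat.beq (Nat.mod g (Nat.mul (Nat.mul c (Nat.gcd L (Nat.pred p))) (Nat.pow 2 (Nat.add k 2)))) 0 = true := by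
      rw [Nat.beq_eq]
      apply Nat.mod_eq_zero_of_dvd
      have := cf_two t (Nat.lcm L (p - 1)) (Dvd.dvd.trans (by omega) (Nat.dvd_lcm_right L (p - 1))) hs.odd
      rw [htl] at this
      have h2 := mul_dvd_mul_left (c * Nat.gcd L (p - 1)) this
      rw [hs.cfe] at h2
      exact h2
    rw [if_pos (pfilt_sound p hp), if_pos c1, if_pos c2] at hk
    exact ih _ _ _ _ _ t (by have := hp.two_le; omega) htl hs hk

theorem T_sound (k g i g0 i0 : ℕ) (h : T k g0 i0 = true) (hg : 1 ≤ g) (hgi : g < i) (hg0 : g ≤ g0)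
    (hi0 : i ≤ i0) (hd : 2 ^ (k + 1) ∣ g) : S g i k 1 1 1 1 3 = true := by
  unfold T at h
  have h1 := blk_sound _ _ _ h i (by omega) (by omega)
  have h2 := blk_sound _ _ _ h1 g (by omega) (by omega)
  simp only [force_eq, ite'_eq, Nat.ble_eq, Nat.beq_eq] at h2
  rw [if_neg (by omega)] at h2
  have h3 : Nat.mod g (Nat.pow 2 (Nat.succ k)) = 0 := Nat.mod_eq_zero_of_dvd hd
  rw [if_pos h3] at h2
  exact h2

theorem lam_lc (l : List ℕ) : ∀ L, (∀ p ∈ l, p.Prime ∧ p % 2 = 1) → l.Pairwise (· < ·) →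
    Nat.lcm L (ArithmeticFunction.carmichael l.prod) = lc L l := by
  induction l with
  | nil =>
    intro L _ _
    have : ArithmeticFunction.carmichael 1 = 1 := by
      simpa using ArithmeticFunction.carmichael_two_pow_of_le_two (n := 0) (by norm_num)
    simp [lc, this]
  | cons p t ih =>
    intro L h hs
    have hp := h p (by simp)
    have hs' := List.pairwise_cons.mp hs
    have hc : Nat.Coprime p t.prod := by
      apply Nat.coprime_list_prod_right_iff.mpr
      intro q hq
      exact (Nat.coprime_primes hp.1 (h q (by simp [hq])).1).mpr (hs'.1 q hq).ne
    have hcp : ArithmeticFunction.carmichael p = p - 1 := by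
      have := ArithmeticFunction.carmichael_pow_of_prime_ne_two 1 hp.1 (by rintro rfl; omega)
      rwa [pow_one, Nat.totient_prime hp.1] at this
    rw [List.prod_cons, ArithmeticFunction.carmichael_mul hc, hcp, lc, ← ih _ (fun q hq => h q (by simp [hq])) hs'.2,
      Nat.lcm_assoc]

theorem lam_eq (l : List ℕ) (h : ∀ p ∈ l, p.Prime ∧ p % 2 = 1) (hs : l.Pairwise (· < ·)) :
    carmichaelLambda l.prod = lc 1 l := by
  have h0 : l.prod ≠ 0 := by
    apply List.prod_ne_zero
    intro h0
    have := (h 0 h0).2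
    omega
  rw [carmichaelLambda, ← ArithmeticFunction.carmichael_eq_exponent h0, ← lam_lc l 1 h hs, Nat.lcm_one_left]

theorem idx561 : carmichaelIndex 561 = 7 := by
  have := lam_eq [3, 11, 17] (by simp; norm_num) (by simp)
  norm_num [lc] at this
  rw [carmichaelIndex, this]

theorem idx6601 : carmichaelIndex 6601 = 5 := by
  have := lam_eq [7, 23, 41] (by simp; norm_num) (by simp)
  norm_num [lc] at this
  rw [carmichaelIndex, this]

theorem lam_dvd {N : ℕ} (h : IsCarmichael N) : carmichaelLambda N ∣ N - 1 := by
  apply Monoid.exponent_dvd_of_forall_pow_eq_one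
  intro u
  have : NeZero N := ⟨by have := h.1; omega⟩
  have h1 := h.2.2 (u : ZMod N).val (ZMod.val_coe_unit_coprime u)
  have h2 := (ZMod.natCast_eq_natCast_iff _ _ _).mpr h1
  ext
  push_cast at h2 ⊢
  simpa using h2

theorem car_odd {N : ℕ} (h : IsCarmichael N) : N % 2 = 1 := by
  by_contra hc
  obtain ⟨h1, h2, h3⟩ := h
  have hN : 2 < N := by
    rcases Nat.lt_or_ge 2 N with h | h
    · exact h
    · obtain rfl : N = 2 := by omega
      exact (h2 Nat.prime_two).elim
  have : Fact (2 < N) := ⟨hN⟩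
  have h4 := h3 (N - 1) ((Nat.coprime_self_sub_left (by omega)).mpr (by simp))
  have h5 := (ZMod.natCast_eq_natCast_iff _ _ _).mpr h4
  rw [Nat.cast_pow, Nat.cast_sub (by omega)] at h5
  simp only [CharP.cast_eq_zero, Nat.cast_one, zero_sub] at h5
  rw [Odd.neg_one_pow (by rw [Nat.odd_iff]; omega)] at h5
  exact ZMod.neg_one_ne_one h5

theorem car_sqf {N : ℕ} (h : IsCarmichael N) : Squarefree N := by
  rw [Nat.squarefree_iff_prime_squarefree]
  intro p hp hd
  have hodd := car_odd h
  have h0 : N ≠ 0 := by have := h.1; omega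
  have hpN : p ∣ N := (Dvd.intro _ rfl).trans hd
  have hp2 : p ≠ 2 := by rintro rfl; omega
  have h1 := ArithmeticFunction.carmichael_dvd hd
  rw [← sq, ArithmeticFunction.carmichael_pow_of_prime_ne_two 2 hp hp2, Nat.totient_prime_pow hp (by norm_num),
    ArithmeticFunction.carmichael_eq_exponent h0] at h1
  have h2 : p ∣ N - 1 := (Dvd.intro (p - 1) (by simp)).trans (h1.trans (lam_dvd h))
  have h3 : p ∣ 1 := by
    have := Nat.dvd_sub hpN h2
    rwa [show N - (N - 1) = 1 by have := h.1; omega] at this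
  exact hp.one_lt.ne' (Nat.dvd_one.mp h3)

theorem main {N : ℕ} (h : IsCarmichael N) (hlim : N < 10 ^ 18) (hi : carmichaelIndex N < 18) :
    N = 561 ∨ N = 6601 := by
  have hN1 := h.1
  have hodd := car_odd h
  have hsq := car_sqf h
  have hld := lam_dvd h
  set l := N.primeFactorsList with hldef
  have hprod : l.prod = N := Nat.prod_primeFactorsList (by omega)
  have hpr : ∀ p ∈ l, p.Prime := fun p hp => Nat.prime_of_mem_primeFactorsList hp
  have hpd : ∀ p ∈ l, p ∣ N := fun p hp => Nat.dvd_of_mem_primeFactorsList hp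
  have hpo : ∀ p ∈ l, p % 2 = 1 := by
    intro p hp
    have := hpd p hp
    rcases Nat.mod_two_eq_zero_or_one p with h0 | h0
    · have := (Nat.dvd_of_mod_eq_zero h0).trans this
      omega
    · exact h0
  have hs : l.Pairwise (· < ·) := by
    have h1 : l.Nodup := (Nat.squarefree_iff_nodup_primeFactorsList (by omega)).mp hsq
    have h2 : l.Pairwise (· ≤ ·) := (Nat.primeFactorsList_sorted N).pairwise
    exact (h2.and h1).imp (fun h => lt_of_le_of_ne h.1 h.2)
  have hlam : carmichaelLambda N = lc 1 l := by
    have := lam_eq l (fun p hp => ⟨hpr p hp, hpo p hp⟩) hs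
    rwa [hprod] at this
  set i := carmichaelIndex N with hidef
  have hiN : lc 1 l * i = N - 1 := by
    rw [hidef, carmichaelIndex, ← hlam]
    exact Nat.mul_div_cancel' hld
  have hcl := cf_lc l 1
  rw [one_mul] at hcl
  set g := cf 1 l with hgdef
  have hlen : 2 ≤ l.length := by
    match l, hprod, hpr with
    | [], hp, _ => simp at hp; omega
    | [p], hp, hpr => simp at hp hpr; rw [hp] at hpr; exact (h.2.1 hpr).elim
    | p :: q :: t, _, _ => simp
  have hpm : pm l + 1 < N := by
    match l, hprod, hpr, hlen with
    | p :: q :: t, hp, hpr, _ =>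
      have h1 := pm_lt (q :: t) (by simp) (fun q hq => (hpr q (List.mem_cons_of_mem _ hq)).two_le)
      have h2 := (hpr p (by simp)).two_le
      rw [List.prod_cons] at hp
      obtain ⟨r, rfl⟩ : ∃ r, p = r + 1 := ⟨p - 1, by omega⟩
      rw [pm, Nat.add_sub_cancel]
      nlinarith
  have hEq : g * (N - 1) = i * pm l := by
    rw [hcl, ← hiN]; ring
  have hgpos : 0 < g := by
    rcases Nat.eq_zero_or_pos g with h0 | h0
    · rw [h0, zero_mul] at hcl
      have := pm_pos l hpr
      omega
    · exact h0
  have hgi : g < i := by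
    by_contra hc
    push Not at hc
    have h1 : i * pm l ≤ g * pm l := Nat.mul_le_mul_right _ hc
    have h2 : g * pm l < g * (N - 1) := Nat.mul_lt_mul_of_pos_left (by omega) hgpos
    omega
  have hg2 : 2 ^ (l.length - 1) ∣ g := by
    match l, hlen, hpo with
    | p :: t, _, hpo =>
      rw [hgdef, cf]
      have := hpo p (by simp)
      refine Dvd.dvd.mul_left ?_ _
      simpa using cf_two t (Nat.lcm 1 (p - 1)) (by simp; omega) (fun q hq => hpo q (by simp [hq]))
  have hlen5 : l.length ≤ 5 := by
    by_contra hc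
    have h1 : 2 ^ 5 ∣ g := (Nat.pow_dvd_pow 2 (by omega)).trans hg2
    have := Nat.le_of_dvd hgpos h1
    omega
  have hH : H g i N 1 1 1 1 3 l := {
    gpos := hgpos
    mpos := one_pos
    lim := hlim
    prod := by rw [one_mul, hprod]
    cfe := by rw [one_mul]
    eq := by
      rw [mul_one, mul_one, hprod, ← hEq, Nat.mul_sub, mul_one]
      have : g * 1 ≤ g * N := Nat.mul_le_mul_left _ (by omega)
      omega
    lce := hiN
    pr := hpr
    odd := hpo
    lo := fun p hp => by
      have := (hpr p hp).two_le
      have := hpo p hp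
      omega
    cop := fun p hp => by
      have h1 : p - 1 ∣ N - 1 := by
        rw [← hiN]
        refine Dvd.dvd.mul_right ?_ _
        have hp2 := hpo p hp
        rw [← hlam, carmichaelLambda, ← ArithmeticFunction.carmichael_eq_exponent (by omega)]
        have := ArithmeticFunction.carmichael_pow_of_prime_ne_two 1 (hpr p hp) (by rintro rfl; omega)
        rw [pow_one, Nat.totient_prime (hpr p hp)] at this
        rw [← this]
        exact ArithmeticFunction.carmichael_dvd (hpd p hp)
      exact Nat.Coprime.coprime_dvd_left h1 ((Nat.coprime_self_sub_left (by omega)).mpr (by simp))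
    sorted := hs }
  have fin : ∀ k, l.length = k + 2 → T k 16 17 = true → N = 561 ∨ N = 6601 := by
    intro k hk hT
    refine S_sound k _ _ _ _ _ l (by norm_num) hk hH (T_sound k g i 16 17 hT hgpos hgi (by omega) (by omega) ?_)
    rw [hk] at hg2
    simpa using hg2
  obtain h2 | h2 | h2 | h2 : l.length = 0 + 2 ∨ l.length = 1 + 2 ∨ l.length = 2 + 2 ∨ l.length = 3 + 2 := by omega
  · exact fin _ h2 t0
  · exact fin _ h2 t1
  · exact fin _ h2 t2
  · exact fin _ h2 t3

end CSI

theorem carmichael_small_index :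
    carmichaelIndex 561 = 7 ∧ (6601 : ℕ) = 7 * 23 * 41 ∧ carmichaelIndex 6601 = 5 ∧
      ∀ N : ℕ, IsCarmichael N → N < 10 ^ 18 →
        (carmichaelIndex N < 18 ↔ N = 561 ∨ N = 6601) := by
  refine ⟨CSI.idx561, by norm_num, CSI.idx6601, ?_⟩
  intro N h hlim
  constructor
  · exact CSI.main h hlim
  · rintro (rfl | rfl)
    · rw [CSI.idx561]; norm_num
    · rw [CSI.idx6601]; norm_num
end

section
/- No Carmichael number N less than 10^17 satisfies φ(N) ∣ N − 1, where φ is Euler's totient function; equivalently, no Carmichael number below 10^17 has integral Lehmer index ℓ(N) = (N-1)/φ(N). -/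
def primeTest (c : ℕ) : Bool :=
  cond (Nat.ble c 31) (cond (Nat.beq (Nat.gcd c 30) 1) true (cond (Nat.beq c 3) true (Nat.beq c 5)))
    (Nat.beq (Nat.gcd c 200560490130) 1)

def okTest (P c : ℕ) : Bool :=
  cond (Nat.beq (Nat.gcd (c - 1) P) 1) (primeTest c) false

def greedy (k Q : ℕ) : ℕ → ℕ → ℕ → ℕ → Bool
  | 0, _, _, _ => false
  | n + 1, a, P, F =>
    cond (Nat.ble 100000000000000000 (P * a)) (Nat.blt P (k * F))
      (cond (okTest Q a) (greedy k Q n (a + 1) (P * a) (F * (a - 1)))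
        (greedy k Q n (a + 1) P F))

def srch : ℕ → ℕ → ℕ → ℕ → Bool
  | 0, _, _, _ => false
  | n + 1, a, P, F =>
    cond (okTest P a)
      (cond (Nat.blt (2 * F) P) (Nat.blt (2 * F + 1) P)
        (cond (greedy 2 P 400 a P F) true
          (cond (srch n (a + 1) (P * a) (F * (a - 1))) (srch n (a + 1) P F) false)))
      (srch n (a + 1) P F)

theorem greedy4 : greedy 4 1 400 3 1 1 = true := by decide +kernel

theorem greedy3 : greedy 3 1 400 5 1 1 = true := by decide +kernel

theorem srch_run : srch 3000 5 1 1 = true := by decide +kernel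

theorem primeTest_of_prime {c : ℕ} (hc : c.Prime) (h3 : 3 ≤ c) : primeTest c = true := by
  by_cases h : c ≤ 31
  · interval_cases c <;> first | rfl | (exfalso; revert hc; norm_num)
  · unfold primeTest
    have h1 : Nat.ble c 31 = false := by
      rw [← Bool.not_eq_true, Nat.ble_eq]; exact h
    rw [h1]
    simp only [cond_false]
    rw [Nat.beq_eq]
    have : Nat.Coprime c 200560490130 := by
      rw [hc.coprime_iff_not_dvd]
      intro hd
      have e : 200560490130 = 2 * 3 * 5 * 7 * 11 * 13 * 17 * 19 * 23 * 29 * 31 := by norm_num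
      rw [e] at hd
      simp only [hc.dvd_mul] at hd
      have H : ∀ m, 0 < m → m ≤ 31 → ¬ c ∣ m := fun m h0 hm hcm =>
        h ((Nat.le_of_dvd h0 hcm).trans hm)
      simp [H] at hd
    exact this

theorem greedy_sound (k Q : ℕ) : ∀ (n a P F : ℕ), 0 < a → greedy k Q n a P F = true →
    ∀ l : List ℕ, l.Pairwise (· < ·) → (∀ q ∈ l, a ≤ q) → (∀ q ∈ l, okTest Q q = true) →
      P * l.prod < 100000000000000000 →
      P * l.prod < k * F * (l.map (fun q => q - 1)).prod := by
  intro n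
  induction n with
  | zero => intro a P F _ h; simp [greedy] at h
  | succ n ih =>
    intro a P F ha h l hl hal hok hB
    unfold greedy at h
    cases hc : Nat.ble 100000000000000000 (P * a) with
    | true =>
      rw [hc] at h
      simp only [cond_true] at h
      rw [Nat.ble_eq] at hc
      have hlt : P < k * F := by simpa [Nat.blt] using h
      cases l with
      | nil => simpa using hlt
      | cons q t =>
        exfalso
        have h1 : a ≤ q := hal q (by simp)
        have h2 : 1 ≤ t.prod := by
          refine Nat.one_le_iff_ne_zero.mpr (fun h0 => ?_)
          rw [List.prod_eq_zero_iff] at h0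
          have := hal 0 (by simp [h0])
          omega
        rw [List.prod_cons] at hB
        have : P * a ≤ P * (q * t.prod) := by
          apply Nat.mul_le_mul_left
          nlinarith
        omega
    | false =>
      rw [hc] at h
      simp only [cond_false] at h
      have hc' : P * a < 100000000000000000 := by
        rw [← Bool.not_eq_true, Nat.ble_eq] at hc; omega
      cases ho : okTest Q a with
      | false =>
        rw [ho] at h
        simp only [cond_false] at h
        refine ih (a + 1) P F (by omega) h l hl (fun q hq => ?_) hok hB
        have h1 := hal q hq
        rcases Nat.eq_or_lt_of_le h1 with h2 | h2
        · have := hok q hq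
          rw [← h2, ho] at this
          simp at this
        · exact h2
      | true =>
        rw [ho] at h
        simp only [cond_true] at h
        have IH := ih (a + 1) (P * a) (F * (a - 1)) (by omega) h
        cases l with
        | nil =>
          have := IH [] (by simp) (by simp) (by simp) (by simpa using hc')
          simp only [List.prod_nil, List.map_nil, mul_one] at this ⊢
          obtain ⟨b, rfl⟩ : ∃ b, a = b + 1 := ⟨a - 1, by omega⟩
          simp only [Nat.add_sub_cancel] at this
          by_contra hcon
          push Not at hcon
          have := Nat.mul_le_mul_right b hcon
          nlinarith
        | cons q t =>
          have hq : a ≤ q := hal q (by simp)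
          rw [List.pairwise_cons] at hl
          have h1 := IH t hl.2 (fun x hx => by have := hl.1 x hx; omega)
            (fun x hx => hok x (by simp [hx])) (by
              rw [List.prod_cons] at hB
              have : P * a * t.prod ≤ P * (q * t.prod) := by
                rw [mul_assoc]
                exact Nat.mul_le_mul_left _ (Nat.mul_le_mul_right _ hq)
              omega)
          simp only [List.prod_cons, List.map_cons]
          obtain ⟨b, rfl⟩ : ∃ b, a = b + 1 := ⟨a - 1, by omega⟩
          obtain ⟨d, rfl⟩ : ∃ d, q = b + 1 + d := ⟨q - (b + 1), by omega⟩
          have e : b + 1 + d - 1 = b + d := by omega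
          rw [e]
          simp only [Nat.add_sub_cancel] at h1
          generalize t.prod = T at *
          generalize (t.map (fun q => q - 1)).prod = T' at *
          have h2 : (P * T) * (b + 1) < (k * F * T') * b := by nlinarith
          have h3 : P * T < k * F * T' := by
            by_contra hcon
            push Not at hcon
            have := Nat.mul_le_mul_right b hcon
            nlinarith
          have h4 := Nat.mul_le_mul_right d h3.le
          nlinarith

theorem map_pred_le (l : List ℕ) : (l.map (fun q => q - 1)).prod ≤ l.prod := by
  induction l with
  | nil => simp
  | cons q t ih =>
    simp only [List.map_cons, List.prod_cons]
    exact Nat.mul_le_mul (by omega) ih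

theorem srch_sound : ∀ (n a P F : ℕ), 3 ≤ a → srch n a P F = true →
    ∀ l : List ℕ, l.Pairwise (· < ·) → (∀ q ∈ l, a ≤ q) → (∀ q ∈ l, q.Prime) →
      P * l.prod < 100000000000000000 →
      P * l.prod = 2 * F * (l.map (fun q => q - 1)).prod + 1 → False := by
  intro n
  induction n with
  | zero => intro a P F _ h; simp [srch] at h
  | succ n ih =>
    intro a P F ha h l hl hal hpr hB hE
    have hok : ∀ q ∈ l, okTest P q = true := by
      intro q hq
      have h1 := primeTest_of_prime (hpr q hq) (ha.trans (hal q hq))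
      have h2 : Nat.gcd (q - 1) P = 1 := by
        have d1 : Nat.gcd (q - 1) P ∣ P * l.prod := (Nat.gcd_dvd_right _ _).mul_right _
        have d2 : Nat.gcd (q - 1) P ∣ 2 * F * (l.map (fun q => q - 1)).prod :=
          (Nat.gcd_dvd_left _ _).trans
            ((List.dvd_prod (List.mem_map_of_mem (f := fun q => q - 1) hq)).mul_left _)
        rw [hE] at d1
        exact Nat.dvd_one.mp ((Nat.dvd_add_right d2).mp d1)
      unfold okTest
      rw [h1, h2]
      rfl
    have skip : okTest P a = false ∨ a ∉ l → srch n (a + 1) P F = true → False := by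
      intro hs h'
      refine ih (a + 1) P F (by omega) h' l hl (fun q hq => ?_) hpr hB hE
      rcases Nat.eq_or_lt_of_le (hal q hq) with h2 | h2
      · exfalso
        subst h2
        rcases hs with hs | hs
        · rw [hok _ hq] at hs; simp at hs
        · exact hs hq
      · exact h2
    unfold srch at h
    cases ho : okTest P a with
    | false =>
      rw [ho] at h
      exact skip (Or.inl ho) h
    | true =>
      rw [ho] at h
      simp only [cond_true] at h
      cases hb : Nat.blt (2 * F) P with
      | true =>
        rw [hb] at h
        simp only [cond_true] at h
        have h' : 2 * F + 1 < P := by simpa [Nat.blt] using h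
        have h1 := map_pred_le l
        have h2 : 1 ≤ l.prod := by
          refine Nat.one_le_iff_ne_zero.mpr (fun h0 => ?_)
          rw [h0] at hE; omega
        have h3 := Nat.mul_le_mul_left (2 * F) h1
        have h4 := Nat.mul_le_mul_right l.prod (show 2 * F + 2 ≤ P from h')
        nlinarith
      | false =>
        rw [hb] at h
        simp only [cond_false] at h
        cases hg : greedy 2 P 400 a P F with
        | true =>
          have := greedy_sound 2 P 400 a P F (by omega) hg l hl hal hok hB
          omega
        | false =>
          rw [hg] at h
          simp only [cond_false] at h
          cases hi : srch n (a + 1) (P * a) (F * (a - 1)) with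
          | false => rw [hi] at h; simp at h
          | true =>
            rw [hi] at h
            simp only [cond_true] at h
            by_cases hm : a ∈ l
            · cases l with
              | nil => simp at hm
              | cons q t =>
                rw [List.pairwise_cons] at hl
                have hqa : q = a := by
                  rcases List.mem_cons.mp hm with h1 | h1
                  · exact h1.symm
                  · have := hl.1 a h1
                    have := hal q (by simp)
                    omega
                subst hqa
                simp only [List.prod_cons, List.map_cons] at hB hE
                refine ih (q + 1) (P * q) (F * (q - 1)) (by omega) hi t hl.2
                  (fun x hx => hl.1 x hx) (fun x hx => hpr x (by simp [hx])) ?_ ?_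
                · rw [mul_assoc]; exact hB
                · rw [mul_assoc, hE]; ring
            · exact skip (Or.inr hm) h

theorem totient_list : ∀ l : List ℕ, l.Pairwise (· < ·) → (∀ q ∈ l, q.Prime) →
    l.prod.totient = (l.map (fun q => q - 1)).prod := by
  intro l
  induction l with
  | nil => simp
  | cons q t ih =>
    intro hl hp
    rw [List.pairwise_cons] at hl
    simp only [List.prod_cons, List.map_cons]
    rw [Nat.totient_mul, ih hl.2 (fun x hx => hp x (by simp [hx])),
      Nat.totient_prime (hp q (by simp))]
    rw [Nat.coprime_list_prod_right_iff]
    intro x hx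
    rw [Nat.coprime_primes (hp q (by simp)) (hp x (by simp [hx]))]
    exact (hl.1 x hx).ne

theorem mod3_list : ∀ l : List ℕ, (∀ q ∈ l, 3 < q ∧ q.Prime) →
    ¬ 3 ∣ (l.map (fun q => q - 1)).prod → (l.map (fun q => q - 1)).prod % 3 = 1 := by
  intro l
  induction l with
  | nil => simp
  | cons q t ih =>
    intro hp h
    simp only [List.map_cons, List.prod_cons] at h ⊢
    have h1 : ¬ 3 ∣ q - 1 := fun hd => h (hd.mul_right _)
    have h2 := ih (fun x hx => hp x (by simp [hx])) (fun hd => h (hd.mul_left _))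
    obtain ⟨h3, h4⟩ := hp q (by simp)
    have h5 : ¬ 3 ∣ q := fun hd => by
      rcases (Nat.dvd_prime h4).mp hd with h | h <;> omega
    have h6 : (q - 1) % 3 = 1 := by omega
    rw [Nat.mul_mod, h6, h2]

theorem okTest_one {q : ℕ} (hq : q.Prime) (h : 3 ≤ q) : okTest 1 q = true := by
  unfold okTest
  rw [primeTest_of_prime hq h, Nat.gcd_one_right]
  rfl

theorem carmichael_no_lehmer :
    ∀ N : ℕ, IsCarmichael N → N < 10 ^ 17 → ¬ (N.totient ∣ N - 1) := by
  rintro N ⟨h1, hnp, -⟩ hN ⟨k, hk⟩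
  have hE : N = N.totient * k + 1 := by omega
  have hcop : ∀ d, d ∣ N → d ∣ N.totient → d = 1 := by
    intro d hd hd'
    rw [hE] at hd
    exact Nat.dvd_one.mp ((Nat.dvd_add_right (hd'.mul_right k)).mp hd)
  have hN2 : N ≠ 2 := fun h => hnp (h ▸ Nat.prime_two)
  have hodd : ¬ 2 ∣ N := fun h => by
    have := hcop 2 h (Nat.totient_even (by omega)).two_dvd
    omega
  have hsq : Squarefree N := by
    rw [Nat.squarefree_iff_prime_squarefree]
    intro p hp hpp
    have : p ∣ N.totient := by
      have h2 := Nat.totient_dvd_of_dvd hpp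
      rw [Nat.totient_mul_of_prime_of_dvd hp dvd_rfl] at h2
      exact (Dvd.intro _ rfl).trans h2
    exact hp.one_lt.ne' (hcop p ((Dvd.intro _ rfl).trans hpp) this)
  obtain ⟨l, hl, hp, hprod⟩ : ∃ l : List ℕ, l.Pairwise (· < ·) ∧ (∀ q ∈ l, q.Prime) ∧
      l.prod = N := by
    refine ⟨N.primeFactorsList, ?_, fun q hq => Nat.prime_of_mem_primeFactorsList hq,
      Nat.prod_primeFactorsList (by omega)⟩
    refine ((Nat.primeFactorsList_sorted N).pairwise.and hsq.nodup_primeFactorsList).imp ?_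
    rintro a b ⟨h, h'⟩
    exact lt_of_le_of_ne h h'
  have htot := totient_list l hl hp
  rw [hprod] at htot
  have h3l : ∀ q ∈ l, 3 ≤ q := by
    intro q hq
    have h2 := (hp q hq).two_le
    rcases Nat.eq_or_lt_of_le h2 with h | h
    · exfalso; apply hodd; rw [h, ← hprod]; exact List.dvd_prod hq
    · exact h
  have hokl : ∀ q ∈ l, okTest 1 q = true := fun q hq => okTest_one (hp q hq) (h3l q hq)
  have hB : 1 * l.prod < 100000000000000000 := by rw [hprod]; omega
  have hk4 : k < 4 := by
    have := greedy_sound 4 1 400 3 1 1 (by norm_num) greedy4 l hl h3l hokl hB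
    rw [hprod, ← htot] at this
    by_contra hc
    push Not at hc
    have := Nat.mul_le_mul_left N.totient hc
    omega
  have hk0 : k ≠ 0 := by rintro rfl; omega
  have hk1 : k ≠ 1 := by
    rintro rfl
    apply hnp
    rw [← Nat.totient_eq_iff_prime (by omega)]
    omega
  by_cases hd3 : 3 ∣ N
  · have hk3 : k ≠ 3 := by rintro rfl; omega
    have hk2 : k = 2 := by omega
    subst hk2
    have h3m : 3 ∈ l := by
      rw [← hprod, Nat.prime_three.prime.dvd_prod_iff] at hd3
      obtain ⟨q, hq, hd⟩ := hd3
      rw [Nat.prime_dvd_prime_iff_eq Nat.prime_three (hp q hq)] at hd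
      rwa [hd]
    cases l with
    | nil => simp at h3m
    | cons q t =>
      rw [List.pairwise_cons] at hl
      have hq3 : q = 3 := by
        rcases List.mem_cons.mp h3m with h | h
        · exact h.symm
        · have := hl.1 3 h
          have := h3l q (by simp)
          omega
      subst hq3
      simp only [List.map_cons, List.prod_cons] at htot
      have hn3 : ¬ 3 ∣ N.totient := fun h => by
        have := hcop 3 hd3 h
        omega
      have := mod3_list t (fun x hx => ⟨hl.1 x hx, hp x (by simp [hx])⟩)
        (fun h => hn3 (by rw [htot]; exact h.mul_left _))
      omega
  · have h5l : ∀ q ∈ l, 5 ≤ q := by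
      intro q hq
      have h3 := h3l q hq
      have h4 : q ≠ 3 := by
        rintro rfl; apply hd3; rw [← hprod]; exact List.dvd_prod hq
      have h5 : q ≠ 4 := by
        rintro rfl; exact absurd (hp 4 hq) (by norm_num)
      omega
    have hk3 : k < 3 := by
      have := greedy_sound 3 1 400 5 1 1 (by norm_num) greedy3 l hl h5l hokl hB
      rw [hprod, ← htot] at this
      by_contra hc
      push Not at hc
      have := Nat.mul_le_mul_left N.totient hc
      omega
    have hk2 : k = 2 := by omega
    subst hk2
    refine srch_sound 3000 5 1 1 (by norm_num) srch_run l hl h5l hp hB ?_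
    rw [hprod, ← htot]
    omega
end
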